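/- arXiv:2411.13662 — 13 statements merged into one kernel-verified Lean document; each statement's English description precedes it below -/
import Mathlib

section
/- A homomorphism f : P → Q of additive commutative monoids is of finite presentation if and only if there exist finitely presented additive commutative monoids P₀ and Q₀, monoid homomorphisms u : P₀ → Q₀, t : P₀ → P, and s : Q₀ → Q, such that the commutative square with sides u, t, f, s is a pushout square in the category of additive commutative monoids (i.e., it is cocartesian: Q together with f and s satisfies the universal property of the pushout of u along t). -/
/-!
For the forward implication, only the finite set `S` of elements of `P` that occur as first
components of the defining relations of `Q` matters: one takes `P₀` free on `S` and `Q₀` the quotient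
of `P₀ × ℕⁿ` by the same relations, with each `p ∈ S` replaced by the corresponding generator.
A compatible pair of maps `P → M`, `Q₀ → M` gives a map `P × ℕⁿ → M` respecting the relations, hence
a map `Q → M`.

For the converse, `Q₀ = ℕⁿ / R` and `P₀` has generators `g₁, …, gₘ`. Let `C` be the congruence on
`P × ℕⁿ` generated by `R` and the `m` relations `(t gⱼ, 0) ∼ (0, bⱼ)`, where `bⱼ` represents `u gⱼ`.
The universal property gives a map `φ : Q → (P × ℕⁿ) / C`. Composing `φ` with the canonical maps in
both directions shows that `P × ℕⁿ → Q` is surjective with kernel congruence `C`.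
-/

universe u

/-- A homomorphism `f : P → Q` of additive commutative monoids is of finite presentation
if there are `n : ℕ`, a surjective homomorphism `π : P × ℕⁿ → Q` with `π (p, 0) = f p`,
and a finite set `R` of pairs such that the kernel congruence of `π` is the additive
congruence generated by `R`. -/
def IsFinitelyPresentedHom {P Q : Type*} [AddCommMonoid P] [AddCommMonoid Q]
    (f : P →+ Q) : Prop :=
  ∃ (n : ℕ) (π : (P × (Fin n → ℕ)) →+ Q),
    Function.Surjective π ∧ (∀ p : P, π (p, 0) = f p) ∧
    ∃ R : Set ((P × (Fin n → ℕ)) × (P × (Fin n → ℕ))),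
      R.Finite ∧ AddCon.ker π = addConGen (fun x y => (x, y) ∈ R)

/-- An additive commutative monoid is finitely presented if the unique homomorphism from
the trivial monoid to it is of finite presentation. -/
def IsFinitelyPresentedMonoid (M : Type*) [AddCommMonoid M] : Prop :=
  IsFinitelyPresentedHom (0 : Unit →+ M)

/-! ### Presentations of monoids -/

/-- A homomorphism respecting the kernel congruence of a surjection factors through it. -/
lemma exists_factor_of_surjective {A B M : Type*} [AddCommMonoid A] [AddCommMonoid B]
    [AddCommMonoid M] (π : A →+ B) (hπ : Function.Surjective π) (h : A →+ M)
    (hle : AddCon.ker π ≤ AddCon.ker h) : ∃ φ : B →+ M, ∀ x, φ (π x) = h x := by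
  have key : ∀ x y, π x = π y → h x = h y := fun x y hxy => hle hxy
  choose g hg using hπ
  refine ⟨⟨⟨fun b => h (g b), ?_⟩, ?_⟩, fun x => key _ _ (hg _)⟩
  · rw [← map_zero h]
    exact key _ _ (by simp [hg])
  · intro a b
    rw [← map_add h]
    exact key _ _ (by simp [hg])

/-- A presentation by a monoid isomorphic to some `ℕᵏ` shows finite presentation. -/
lemma isFinitelyPresentedMonoid_of_equiv {A M : Type*} [AddCommMonoid A] [AddCommMonoid M]
    {k : ℕ} (e : (Fin k → ℕ) ≃+ A) (ρ : A →+ M) (hρ : Function.Surjective ρ)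
    (R : Set (A × A)) (hR : R.Finite) (hker : AddCon.ker ρ = addConGen (fun x y => (x, y) ∈ R)) :
    IsFinitelyPresentedMonoid M := by
  let i : A →+ Unit × (Fin k → ℕ) := (AddMonoidHom.inr Unit (Fin k → ℕ)).comp e.symm.toAddMonoidHom
  let j : Unit × (Fin k → ℕ) →+ A := e.toAddMonoidHom.comp (AddMonoidHom.snd Unit (Fin k → ℕ))
  have hij : ∀ x, i (j x) = x := fun x => by simp [i, j]
  have hji : ∀ x, j (i x) = x := fun x => by simp [i, j]
  refine ⟨k, ρ.comp j, fun q => ?_, fun p => ?_, Prod.map i i '' R, hR.image _, ?_⟩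
  · obtain ⟨a, rfl⟩ := hρ q
    exact ⟨i a, by simp [hji]⟩
  · have : ((p, 0) : Unit × (Fin k → ℕ)) = 0 := rfl
    rw [this, map_zero, map_zero]
  · apply le_antisymm
    · intro x y hxy
      have h1 : AddCon.ker ρ ≤ (addConGen (fun x y => (x, y) ∈ Prod.map i i '' R)).comap i
          (map_add i) := by
        rw [hker]
        refine AddCon.addConGen_le.2 fun x y h => ?_
        exact AddConGen.Rel.of _ _ ⟨(x, y), h, rfl⟩
      have h2 := h1 (x := j x) (y := j y) hxy
      rw [AddCon.comap_rel, hij, hij] at h2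
      exact h2
    · refine AddCon.addConGen_le.2 ?_
      rintro _ _ ⟨⟨x, y⟩, h, he⟩
      obtain ⟨rfl, rfl⟩ := Prod.ext_iff.1 he
      have h1 : AddCon.ker ρ x y := by
        rw [hker]
        exact AddConGen.Rel.of _ _ h
      change ρ (j (i x)) = ρ (j (i y))
      rw [hji, hji]
      exact h1

/-- The trivial factor in the presentation of a finitely presented monoid can be dropped. -/
lemma IsFinitelyPresentedMonoid.exists_presentation {M : Type*} [AddCommMonoid M]
    (h : IsFinitelyPresentedMonoid M) :
    ∃ (n : ℕ) (ρ : (Fin n → ℕ) →+ M), Function.Surjective ρ ∧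
      ∃ R : Set ((Fin n → ℕ) × (Fin n → ℕ)), R.Finite ∧
        AddCon.ker ρ = addConGen (fun x y => (x, y) ∈ R) := by
  obtain ⟨n, π, hπ, -, R, hR, hker⟩ := h
  let i : (Fin n → ℕ) →+ Unit × (Fin n → ℕ) := AddMonoidHom.inr _ _
  let j : Unit × (Fin n → ℕ) →+ (Fin n → ℕ) := AddMonoidHom.snd _ _
  have hij : ∀ x, i (j x) = x := fun x => rfl
  refine ⟨n, π.comp i, fun q => ?_, Prod.map j j '' R, hR.image _, ?_⟩
  · obtain ⟨a, rfl⟩ := hπ q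
    exact ⟨j a, rfl⟩
  · apply le_antisymm
    · intro x y hxy
      have h1 : AddCon.ker π ≤ (addConGen (fun x y => (x, y) ∈ Prod.map j j '' R)).comap j
          (map_add j) := by
        rw [hker]
        refine AddCon.addConGen_le.2 fun x y h => ?_
        exact AddConGen.Rel.of _ _ ⟨(x, y), h, rfl⟩
      exact h1 (x := i x) (y := i y) hxy
    · refine AddCon.addConGen_le.2 ?_
      rintro _ _ ⟨⟨x, y⟩, h, he⟩
      obtain ⟨rfl, rfl⟩ := Prod.ext_iff.1 he
      have h1 : AddCon.ker π x y := by
        rw [hker]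
        exact AddConGen.Rel.of _ _ h
      exact h1

/-! ### Cobase change of a map between finitely presented monoids -/

open CategoryTheory in
/-- The cobase change of a homomorphism to a finitely presented monoid is of finite presentation;
of the source, only finite generation is used. -/
lemma isFinitelyPresentedHom_of_isPushout {P Q P₀ Q₀ : Type u} [AddCommMonoid P] [AddCommMonoid Q]
    [AddCommMonoid P₀] [AddCommMonoid Q₀] (f : P →+ Q) (u' : P₀ →+ Q₀) (t : P₀ →+ P) (s : Q₀ →+ Q)
    (hP : IsFinitelyPresentedMonoid P₀) (hQ : IsFinitelyPresentedMonoid Q₀)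
    (h : IsPushout (AddCommMonCat.ofHom u') (AddCommMonCat.ofHom t) (AddCommMonCat.ofHom s)
      (AddCommMonCat.ofHom f)) :
    IsFinitelyPresentedHom f := by
  obtain ⟨m, σ, hσ, -⟩ := hP.exists_presentation
  obtain ⟨n, ρ, hρ, R, hR, hker⟩ := hQ.exists_presentation
  have hcomm : ∀ x, s (u' x) = f (t x) := fun x =>
    congrArg (fun k => AddCommMonCat.Hom.hom k x) h.w
  choose b hb using fun j : Fin m => hρ (u' (σ (Pi.single j 1)))
  let π : P × (Fin n → ℕ) →+ Q := f.coprod (s.comp ρ)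
  let i : (Fin n → ℕ) →+ P × (Fin n → ℕ) := AddMonoidHom.inr _ _
  let R' : Set ((P × (Fin n → ℕ)) × (P × (Fin n → ℕ))) :=
    Prod.map i i '' R ∪ Set.range (fun j => ((t (σ (Pi.single j 1)), 0), (0, b j)))
  let C : AddCon (P × (Fin n → ℕ)) := addConGen (fun x y => (x, y) ∈ R')
  have hC : C ≤ AddCon.ker π := by
    refine AddCon.addConGen_le.2 ?_
    rintro _ _ (⟨⟨x, y⟩, hxy, he⟩ | ⟨j, he⟩)
    · obtain ⟨rfl, rfl⟩ := Prod.ext_iff.1 he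
      have h1 : AddCon.ker ρ x y := by
        rw [hker]
        exact AddConGen.Rel.of _ _ hxy
      have h2 : ρ x = ρ y := h1
      change π (i x) = π (i y)
      simp [π, i, h2]
    · obtain ⟨rfl, rfl⟩ := Prod.ext_iff.1 he
      change π _ = π _
      simp [π, hb, hcomm]
  obtain ⟨τ, hτ⟩ := exists_factor_of_surjective ρ hρ (C.mk'.comp i) (by
    rw [hker]
    refine AddCon.addConGen_le.2 fun x y hxy => ?_
    exact (AddCon.eq C).2 (AddConGen.Rel.of _ _ (Or.inl ⟨(x, y), hxy, rfl⟩)))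
  let ι : P →+ C.Quotient := C.mk'.comp (AddMonoidHom.inl _ _)
  have hι : τ.comp u' = ι.comp t := by
    have h1 : (τ.comp u').comp σ = (ι.comp t).comp σ := by
      apply AddMonoidHom.functions_ext'
      intro j
      ext
      change τ (u' (σ (Pi.single j 1))) = ι (t (σ (Pi.single j 1)))
      rw [← hb, hτ]
      exact ((AddCon.eq C).2 (AddConGen.Rel.of _ _ (Or.inr ⟨j, rfl⟩))).symm
    ext x
    obtain ⟨y, rfl⟩ := hσ x
    exact DFunLike.congr_fun h1 y
  have hw : AddCommMonCat.ofHom u' ≫ AddCommMonCat.ofHom τ =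
      AddCommMonCat.ofHom t ≫ AddCommMonCat.ofHom ι := by
    rw [← AddCommMonCat.ofHom_comp, ← AddCommMonCat.ofHom_comp, hι]
  let φ : Q →+ C.Quotient := (h.desc _ _ hw).hom
  have hφs : ∀ x, φ (s x) = τ x := fun x =>
    congrArg (fun k => AddCommMonCat.Hom.hom k x) (h.inl_desc _ _ hw)
  have hφf : ∀ x, φ (f x) = ι x := fun x =>
    congrArg (fun k => AddCommMonCat.Hom.hom k x) (h.inr_desc _ _ hw)
  have hφπ : ∀ x, φ (π x) = C.mk' x := by
    rintro ⟨p, a⟩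
    have h1 : π (p, a) = f p + s (ρ a) := rfl
    rw [h1, map_add, hφs, hφf, hτ]
    change C.mk' (p, 0) + C.mk' (0, a) = _
    rw [← map_add]
    simp
  let ψ : C.Quotient →+ Q := C.lift π hC
  -- `ψ ∘ φ` is the identity by uniqueness in the universal property, so `ψ` is surjective.
  have hψφ : ∀ q, ψ (φ q) = q := by
    have h1 : AddCommMonCat.ofHom (ψ.comp φ) = 𝟙 (AddCommMonCat.of Q) := by
      apply h.hom_ext
      · ext x
        change ψ (φ (s x)) = s x
        obtain ⟨a, rfl⟩ := hρ x
        rw [hφs, hτ]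
        change π (i a) = _
        simp [π, i]
      · ext x
        change ψ (φ (f x)) = f x
        rw [hφf]
        change π (x, 0) = _
        simp [π]
    exact fun q => congrArg (fun k => AddCommMonCat.Hom.hom k q) h1
  refine ⟨n, π, fun q => ?_, fun p => by simp [π], R', ?_, le_antisymm ?_ hC⟩
  · obtain ⟨x, hx⟩ := C.mk'_surjective (φ q)
    refine ⟨x, ?_⟩
    rw [← hψφ q, ← hx]
    rfl
  · exact (hR.image _).union (Set.finite_range _)
  · intro x y hxy
    have h1 : π x = π y := hxy
    refine (AddCon.eq C).1 ?_
    change C.mk' x = C.mk' y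
    rw [← hφπ, ← hφπ, h1]

/-! ### Descent to a map between finitely presented monoids -/

open CategoryTheory in
/-- The homomorphism is the cobase change of `P₀ → Q₀`, where `P₀` is free on the elements of `P`
occurring in the relations, which are lifted to define `Q₀`. -/
lemma IsFinitelyPresentedHom.exists_isPushout {P Q : Type u} [AddCommMonoid P] [AddCommMonoid Q]
    {f : P →+ Q} (h : IsFinitelyPresentedHom f) :
    ∃ (P₀ Q₀ : AddCommMonCat.{u}) (u' : P₀ ⟶ Q₀)
        (t : P₀ ⟶ AddCommMonCat.of P) (s : Q₀ ⟶ AddCommMonCat.of Q),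
        IsFinitelyPresentedMonoid ↥P₀ ∧ IsFinitelyPresentedMonoid ↥Q₀ ∧
        IsPushout u' t s (AddCommMonCat.ofHom f) := by
  classical
  obtain ⟨n, π, hπ, hπf, R, hR, hker⟩ := h
  let S : Set P := (fun r => r.1.1) '' R ∪ (fun r => r.2.1) '' R
  have hS : S.Finite := (hR.image _).union (hR.image _)
  have : Finite S := hS
  have : Fintype S := Fintype.ofFinite S
  let A := (S →₀ ℕ) × (Fin n → ℕ)
  let t : (S →₀ ℕ) →+ P := Finsupp.liftAddHom (fun p : S => multiplesHom P p.1)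
  have ht : ∀ p : S, t (Finsupp.single p 1) = p := fun p => by simp [t]
  let T : A →+ P × (Fin n → ℕ) := t.prodMap (AddMonoidHom.id _)
  let d : S × (Fin n → ℕ) → A := fun x => (Finsupp.single x.1 1, x.2)
  let v : S × (Fin n → ℕ) → P × (Fin n → ℕ) := fun x => (x.1, x.2)
  have hTd : ∀ x, T (d x) = v x := fun x => Prod.ext (ht x.1) rfl
  have hv : Function.Injective v := fun x y hxy =>
    Prod.ext (Subtype.ext (congrArg Prod.fst hxy)) (congrArg Prod.snd hxy :)
  -- The relations in `R`, with every element of `S` replaced by the corresponding generator.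
  let R₀ : Set (A × A) := Prod.map d d '' (Prod.map v v ⁻¹' R)
  have hR₀ : R₀.Finite := (hR.preimage (hv.prodMap hv).injOn).image _
  let C : AddCon A := addConGen (fun x y => (x, y) ∈ R₀)
  have hC : C ≤ AddCon.ker (π.comp T) := by
    refine AddCon.addConGen_le.2 ?_
    rintro _ _ ⟨⟨x, y⟩, hxy, he⟩
    obtain ⟨rfl, rfl⟩ := Prod.ext_iff.1 he
    have h1 : AddCon.ker π (v x) (v y) := by
      rw [hker]
      exact AddConGen.Rel.of _ _ hxy
    change π (T (d x)) = π (T (d y))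
    rw [hTd, hTd]
    exact h1
  let u' : (S →₀ ℕ) →+ C.Quotient := C.mk'.comp (AddMonoidHom.inl _ _)
  let s : C.Quotient →+ Q := C.lift (π.comp T) hC
  have hs : ∀ x, s (C.mk' x) = π (T x) := fun x => rfl
  let e₁ : (S →₀ ℕ) ≃+ (Fin (Fintype.card S) → ℕ) :=
    ((Finsupp.linearEquivFunOnFinite ℕ ℕ S).trans
      (LinearEquiv.funCongrLeft ℕ ℕ (Fintype.equivFin S).symm)).toAddEquiv
  let e₂ : (Fin (Fintype.card S + n) → ℕ) ≃+ A :=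
    ((LinearEquiv.funCongrLeft ℕ ℕ finSumFinEquiv).trans
      (LinearEquiv.sumArrowLequivProdArrow _ _ ℕ ℕ)).toAddEquiv.trans
      (e₁.symm.prodCongr (AddEquiv.refl _))
  refine ⟨AddCommMonCat.of (S →₀ ℕ), AddCommMonCat.of C.Quotient, AddCommMonCat.ofHom u',
    AddCommMonCat.ofHom t, AddCommMonCat.ofHom s, ?_, ?_, ?_⟩
  · refine isFinitelyPresentedMonoid_of_equiv e₁.symm (AddMonoidHom.id _) Function.surjective_id
      ∅ Set.finite_empty (le_antisymm ?_ (AddCon.addConGen_le.2 fun x y h => h.elim))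
    rintro x y (rfl : x = y)
    exact AddCon.refl _ _
  · exact isFinitelyPresentedMonoid_of_equiv e₂ C.mk' C.mk'_surjective R₀ hR₀ C.mk'_ker
  · have hw : AddCommMonCat.ofHom u' ≫ AddCommMonCat.ofHom s =
        AddCommMonCat.ofHom t ≫ AddCommMonCat.ofHom f := by
      refine AddCommMonCat.hom_ext (AddMonoidHom.ext fun x => ?_)
      change s (C.mk' (x, 0)) = f (t x)
      rw [hs, ← hπf]
      rfl
    have hlift : ∀ {M : Type u} [AddCommMonoid M] (g : P →+ M) (k : C.Quotient →+ M),
        (∀ x, k (u' x) = g (t x)) → ∃ φ : Q →+ M, (∀ x, φ (s x) = k x) ∧ ∀ x, φ (f x) = g x := by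
      intro M _ g k hgk
      let H : P × (Fin n → ℕ) →+ M := g.coprod ((k.comp C.mk').comp (AddMonoidHom.inr _ _))
      have hH : ∀ x : A, H (T x) = k (C.mk' x) := by
        rintro ⟨x, a⟩
        change g (t x) + k (C.mk' (0, a)) = _
        have hx : ((x, a) : A) = (x, 0) + (0, a) :=
          Prod.ext (add_zero x).symm (zero_add a).symm
        rw [hx, ← hgk, map_add, map_add]
        rfl
      obtain ⟨φ, hφ⟩ := exists_factor_of_surjective π hπ H (by
        rw [hker]
        refine AddCon.addConGen_le.2 ?_
        rintro ⟨p, a⟩ ⟨q, b⟩ hr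
        let x : S × (Fin n → ℕ) := (⟨p, Or.inl ⟨_, hr, rfl⟩⟩, a)
        let y : S × (Fin n → ℕ) := (⟨q, Or.inr ⟨_, hr, rfl⟩⟩, b)
        change H (v x) = H (v y)
        rw [← hTd, ← hTd, hH, hH]
        exact congrArg k ((AddCon.eq C).2 (AddConGen.Rel.of _ _ ⟨(x, y), hr, rfl⟩)))
      refine ⟨φ, fun x => ?_, fun x => ?_⟩
      · obtain ⟨a, rfl⟩ := C.mk'_surjective x
        rw [hs, hφ, hH]
      · rw [← hπf, hφ]
        simp [H]
    have huniq : ∀ {M : Type u} [AddCommMonoid M] (φ ψ : Q →+ M), (∀ x, φ (s x) = ψ (s x)) →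
        (∀ x, φ (f x) = ψ (f x)) → φ = ψ := by
      intro M _ φ ψ h1 h2
      ext q
      obtain ⟨⟨p, a⟩, rfl⟩ := hπ q
      have h3 : π (p, a) = f p + s (C.mk' (0, a)) := by
        have hT : T (0, a) = (0, a) := Prod.ext (map_zero t) rfl
        rw [hs, ← hπf, hT, ← map_add, Prod.mk_add_mk, add_zero, zero_add]
      rw [h3, map_add, map_add, h1, h2]
    refine ⟨⟨hw⟩, ⟨Limits.PushoutCocone.IsColimit.mk hw
      (fun c => AddCommMonCat.ofHom (hlift c.inr.hom c.inl.hom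
        (fun x => congrArg (fun k => AddCommMonCat.Hom.hom k x) c.condition)).choose)
      (fun c => ?_) (fun c => ?_) (fun c m h1 h2 => ?_)⟩⟩
    · ext x
      exact (hlift c.inr.hom c.inl.hom
        (fun x => congrArg (fun k => AddCommMonCat.Hom.hom k x) c.condition)).choose_spec.1 x
    · ext x
      exact (hlift c.inr.hom c.inl.hom
        (fun x => congrArg (fun k => AddCommMonCat.Hom.hom k x) c.condition)).choose_spec.2 x
    · have hc := (hlift c.inr.hom c.inl.hom
        (fun x => congrArg (fun k => AddCommMonCat.Hom.hom k x) c.condition)).choose_spec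
      apply AddCommMonCat.hom_ext
      refine huniq _ _ (fun x => ?_) (fun x => ?_)
      · exact (congrArg (fun k => AddCommMonCat.Hom.hom k x) h1).trans (hc.1 x).symm
      · exact (congrArg (fun k => AddCommMonCat.Hom.hom k x) h2).trans (hc.2 x).symm

open CategoryTheory in
/-- A homomorphism `f : P → Q` of additive commutative monoids is of finite presentation
iff it is the cobase change (pushout) of a morphism `u : P₀ → Q₀` between finitely
presented additive commutative monoids: there exist `u : P₀ → Q₀`, `t : P₀ → P`, and
`s : Q₀ → Q` making a pushout square in the category of additive commutative monoids. -/
theorem isFinitelyPresentedHom_iff_pushout {P Q : Type u} [AddCommMonoid P] [AddCommMonoid Q]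
    (f : P →+ Q) :
    IsFinitelyPresentedHom f ↔
      ∃ (P₀ Q₀ : AddCommMonCat.{u}) (u' : P₀ ⟶ Q₀)
        (t : P₀ ⟶ AddCommMonCat.of P) (s : Q₀ ⟶ AddCommMonCat.of Q),
        IsFinitelyPresentedMonoid ↥P₀ ∧ IsFinitelyPresentedMonoid ↥Q₀ ∧
        IsPushout u' t s (AddCommMonCat.ofHom f) := by
  refine ⟨fun h => h.exists_isPushout, ?_⟩
  rintro ⟨P₀, Q₀, u', t, s, hP, hQ, h⟩
  exact isFinitelyPresentedHom_of_isPushout f u'.hom t.hom s.hom hP hQ h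
end

section
/- Let G be an abelian group, Q ⊆ G a saturated submonoid, P₀ ⊆ Q a submonoid, and S ⊆ Q a subset such that Q equals the saturation in Q^gp of the submonoid generated by P₀ ∪ S. Then every face F of Q equals the saturation in Q of the submonoid generated by (F ∩ P₀) ∪ (F ∩ S); that is, F = {q ∈ Q : ∃ n ≥ 1, n•q lies in the submonoid generated by (F ∩ P₀) ∪ (F ∩ S)}. -/
/-!
A face contains all the summands in `Q` of its elements. Hence a multiple `n • q` of some
`q ∈ F` that is a sum of elements of `P₀ ∪ S` only involves elements of `F`
(`IsFace.mem_closure_inter`). Conversely, an element of `Q` with a positive multiple in `F`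
lies in `F`, being a summand of that multiple (`IsFace.mem_of_nsmul_mem`).
-/

variable {G : Type*} [AddCommGroup G]

/-- The groupification of a submonoid of an abelian group: the subgroup it generates. -/
def gp (P : AddSubmonoid G) : AddSubgroup G :=
  AddSubgroup.closure (P : Set G)

/-- The saturation of the submonoid `N` inside the subgroup `H`:
`{x ∈ H : ∃ n ≥ 1, n • x ∈ N}`. -/
def satIn (N : AddSubmonoid G) (H : AddSubgroup G) : Set G :=
  {x | x ∈ H ∧ ∃ n : ℕ, 1 ≤ n ∧ n • x ∈ N}

/-- A submonoid is saturated if it equals its saturation in its groupification. -/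
def IsSaturated (Q : AddSubmonoid G) : Prop :=
  (Q : Set G) = satIn Q (gp Q)

/-- A submonoid `V` is valuative if for every `x ∈ V^gp`, either `x ∈ V` or `-x ∈ V`. -/
def IsValuative (V : AddSubmonoid G) : Prop :=
  ∀ x ∈ gp V, x ∈ V ∨ -x ∈ V

/-- A submonoid `V` is divisible if its groupification is a divisible group. -/
def IsDivisible (V : AddSubmonoid G) : Prop :=
  ∀ x ∈ gp V, ∀ n : ℕ, 1 ≤ n → ∃ y ∈ gp V, n • y = x

/-- A face of the submonoid `Q` is a submonoid `F ⊆ Q` such that whenever a sum of two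
elements of `Q` lies in `F`, both summands lie in `F`. -/
def IsFace (Q F : AddSubmonoid G) : Prop :=
  F ≤ Q ∧ ∀ p ∈ Q, ∀ p' ∈ Q, p + p' ∈ F → p ∈ F ∧ p' ∈ F

/-- A sum of elements of `T ⊆ Q` that lies in the face `F` is a sum of elements of `F ∩ T`,
because a face contains every summand in `Q` of each of its elements. -/
theorem IsFace.mem_closure_inter {Q F : AddSubmonoid G} (hF : IsFace Q F) {T : Set G}
    (hT : T ⊆ (Q : Set G)) {x : G} (hx : x ∈ AddSubmonoid.closure T) (hxF : x ∈ F) :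
    x ∈ AddSubmonoid.closure ((F : Set G) ∩ T) := by
  have hTQ : AddSubmonoid.closure T ≤ Q := AddSubmonoid.closure_le.2 hT
  induction hx using AddSubmonoid.closure_induction with
  | mem y hy => exact AddSubmonoid.subset_closure ⟨hxF, hy⟩
  | zero => exact zero_mem _
  | add y z hy hz ihy ihz =>
    obtain ⟨hyF, hzF⟩ := hF.2 y (hTQ hy) z (hTQ hz) hxF
    exact add_mem (ihy hyF) (ihz hzF)

/-- A face `F` of `Q` is saturated in `Q`: `q` is a summand of `n • q` as soon as `1 ≤ n`. -/
theorem IsFace.mem_of_nsmul_mem {Q F : AddSubmonoid G} (hF : IsFace Q F) {q : G} (hq : q ∈ Q)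
    {n : ℕ} (hn : 1 ≤ n) (h : n • q ∈ F) : q ∈ F := by
  obtain ⟨k, rfl⟩ := Nat.exists_eq_add_of_le hn
  rw [add_nsmul, one_nsmul] at h
  exact (hF.2 q hq (k • q) (nsmul_mem hq k) h).1

/-- Let `Q` be a saturated submonoid of an abelian group `G`, `P₀ ⊆ Q` a submonoid and
`S ⊆ Q` a subset such that `Q` is the saturation in `Q^gp` of the submonoid generated by
`P₀ ∪ S`.  Then every face `F` of `Q` equals the saturation in `Q` of the submonoid
generated by `(F ∩ P₀) ∪ (F ∩ S)`. -/
theorem face_eq_saturation_of_satGenerating (Q : AddSubmonoid G) (hQ : IsSaturated Q)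
    (P₀ : AddSubmonoid G) (hP₀Q : P₀ ≤ Q)
    (S : Set G) (hSQ : S ⊆ (Q : Set G))
    (hgen : (Q : Set G) = satIn (AddSubmonoid.closure ((P₀ : Set G) ∪ S)) (gp Q))
    (F : AddSubmonoid G) (hF : IsFace Q F) :
    (F : Set G) = {q : G | q ∈ Q ∧ ∃ n : ℕ, 1 ≤ n ∧
      n • q ∈ AddSubmonoid.closure (((F : Set G) ∩ (P₀ : Set G)) ∪ ((F : Set G) ∩ S))} := by
  rw [← Set.inter_union_distrib_left]
  ext q
  constructor
  · intro hq
    have hqQ : q ∈ (Q : Set G) := hF.1 hq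
    have hqsat := hqQ
    rw [hgen] at hqsat
    obtain ⟨-, n, hn, hmem⟩ := hqsat
    exact ⟨hqQ, n, hn,
      hF.mem_closure_inter (Set.union_subset hP₀Q hSQ) hmem (nsmul_mem hq n)⟩
  · rintro ⟨hqQ, n, hn, hmem⟩
    exact hF.mem_of_nsmul_mem hqQ hn (AddSubmonoid.closure_le.2 Set.inter_subset_left hmem)
end

section
/- Let G be an abelian group, Q ⊆ G a saturated submonoid, P an additive commutative monoid, θ : P → Q a monoid homomorphism, and S ⊆ Q a finite subset such that Q equals the saturation in Q^gp of the submonoid generated by θ(P) ∪ S. Then for every face F₀ of P, the set of faces F of Q with θ⁻¹(F) = F₀ has cardinality at most 2^{|S|}. In particular the fibres of the preimage map Spec(Q) → Spec(P), F ↦ θ⁻¹(F), are finite, and if P has finitely many faces then so does Q. -/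
/-!
A face `F` of `Q` is determined by the pair `(θ⁻¹(F), F ∩ S)`. Indeed, if `x ∈ F`, some positive
multiple `n • x` is a sum of elements of `θ(P) ∪ S`; each summand lies in `F`, hence in any face
`F'` with the same preimage and the same trace on `S`, so `n • x ∈ F'`, and therefore `x ∈ F'`
(`face_le_of_comap_le_of_inter_subset`). On a fibre of `F ↦ θ⁻¹(F)` the map `F ↦ S ∩ F` into the
subsets of `S` is thus injective, which gives the bound `2 ^ |S|`; finiteness of the faces of `Q`
follows since preimages of faces are faces.
-/

variable {G : Type*} [AddCommGroup G]

/-- A face of an abstract additive commutative monoid `M` is a submonoid `F` such that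
whenever `p + p' ∈ F`, both `p ∈ F` and `p' ∈ F`. -/
def IsFaceM {M : Type*} [AddCommMonoid M] (F : AddSubmonoid M) : Prop :=
  ∀ p p' : M, p + p' ∈ F → p ∈ F ∧ p' ∈ F

/-- A face of `Q` is determined, even as far as inclusions go, by its preimage in `P` and its
trace on `S`: membership propagates along generators because summands of elements of a face lie
in that face, and from `n • x` to `x` because `x` is a summand of `n • x`. -/
theorem face_le_of_comap_le_of_inter_subset {P : Type*} [AddCommMonoid P]
    (Q : AddSubmonoid G) (θ : P →+ G) (hθ : ∀ p : P, θ p ∈ Q)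
    (S : Set G) (hSQ : S ⊆ (Q : Set G))
    (hgen : (Q : Set G) = satIn (AddSubmonoid.closure (Set.range θ ∪ S)) (gp Q))
    (F F' : AddSubmonoid G) (hF : IsFace Q F) (hF' : IsFace Q F')
    (hθF : F.comap θ ≤ F'.comap θ) (hSF : S ∩ F ⊆ F') : F ≤ F' := by
  have key : ∀ y ∈ AddSubmonoid.closure (Set.range θ ∪ S), y ∈ Q ∧ (y ∈ F → y ∈ F') := by
    intro y hy
    induction hy using AddSubmonoid.closure_induction with
    | mem y hy =>
      rcases hy with ⟨p, rfl⟩ | hy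
      · exact ⟨hθ p, fun h => hθF h⟩
      · exact ⟨hSQ hy, fun h => hSF ⟨hy, h⟩⟩
    | zero => exact ⟨Q.zero_mem, fun _ => F'.zero_mem⟩
    | add a b _ _ ha hb =>
      refine ⟨Q.add_mem ha.1 hb.1, fun h => ?_⟩
      obtain ⟨haF, hbF⟩ := hF.2 a ha.1 b hb.1 h
      exact F'.add_mem (ha.2 haF) (hb.2 hbF)
  intro x hx
  have hxQ : x ∈ Q := hF.1 hx
  have hxsat : x ∈ satIn (AddSubmonoid.closure (Set.range θ ∪ S)) (gp Q) := hgen ▸ hxQ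
  obtain ⟨-, n, hn, hnx⟩ := hxsat
  have hnF' : n • x ∈ F' := (key _ hnx).2 (F.nsmul_mem hx n)
  obtain ⟨m, rfl⟩ := Nat.exists_eq_add_of_le' hn
  rw [succ_nsmul'] at hnF'
  exact (hF'.2 x hxQ (m • x) (Q.nsmul_mem hxQ m) hnF').1

/-- Let `θ : P → Q` be a homomorphism from an additive commutative monoid `P` to a
saturated submonoid `Q` of an abelian group `G`, and `S ⊆ Q` a finite subset such that
`Q` is the saturation in `Q^gp` of the submonoid generated by `θ(P) ∪ S`.  Then for every
face `F₀` of `P`, the set of faces `F` of `Q` with `θ⁻¹(F) = F₀` is finite of cardinality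
at most `2^{|S|}`; in particular the fibres of `Spec Q → Spec P` are finite, and if `P`
has finitely many faces, so does `Q`. -/
theorem spec_fibres_finite {P : Type*} [AddCommMonoid P]
    (Q : AddSubmonoid G) (hQ : IsSaturated Q)
    (θ : P →+ G) (hθ : ∀ p : P, θ p ∈ Q)
    (S : Set G) (hSfin : S.Finite) (hSQ : S ⊆ (Q : Set G))
    (hgen : (Q : Set G) = satIn (AddSubmonoid.closure (Set.range θ ∪ S)) (gp Q)) :
    (∀ F₀ : AddSubmonoid P, IsFaceM F₀ →
        {F : AddSubmonoid G | IsFace Q F ∧ F.comap θ = F₀}.Finite ∧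
        {F : AddSubmonoid G | IsFace Q F ∧ F.comap θ = F₀}.ncard ≤ 2 ^ S.ncard) ∧
    ({F₀ : AddSubmonoid P | IsFaceM F₀}.Finite →
        {F : AddSubmonoid G | IsFace Q F}.Finite) := by
  have inj : ∀ F₀ : AddSubmonoid P, Set.InjOn (fun F : AddSubmonoid G => S ∩ (F : Set G))
      {F : AddSubmonoid G | IsFace Q F ∧ F.comap θ = F₀} := by
    rintro F₀ F ⟨hF, hF₀⟩ F' ⟨hF', hF₀'⟩ (hS : S ∩ (F : Set G) = S ∩ (F' : Set G))
    apply le_antisymm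
    · exact face_le_of_comap_le_of_inter_subset Q θ hθ S hSQ hgen F F' hF hF'
        (hF₀.trans hF₀'.symm).le (hS ▸ Set.inter_subset_right)
    · exact face_le_of_comap_le_of_inter_subset Q θ hθ S hSQ hgen F' F hF' hF
        (hF₀'.trans hF₀.symm).le (hS ▸ Set.inter_subset_right)
  have maps : ∀ F₀ : AddSubmonoid P, Set.MapsTo (fun F : AddSubmonoid G => S ∩ (F : Set G))
      {F : AddSubmonoid G | IsFace Q F ∧ F.comap θ = F₀} (𝒫 S) :=
    fun _ _ _ => Set.inter_subset_left
  have fin : ∀ F₀ : AddSubmonoid P,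
      {F : AddSubmonoid G | IsFace Q F ∧ F.comap θ = F₀}.Finite := fun F₀ =>
    Set.Finite.of_injOn (maps F₀) (inj F₀) hSfin.powerset
  refine ⟨fun F₀ _ => ⟨fin F₀, ?_⟩, fun hP => ?_⟩
  · rw [← Set.ncard_powerset S hSfin]
    exact Set.ncard_le_ncard_of_injOn _ (maps F₀) (inj F₀) hSfin.powerset
  · refine (hP.biUnion fun F₀ _ => fin F₀).subset fun F hF => ?_
    refine Set.mem_biUnion (x := F.comap θ) ?_ ⟨hF, rfl⟩
    intro p p' h
    exact hF.2 (θ p) (hθ p) (θ p') (hθ p') (by simpa using h)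
end

section
/- Let A and B be abelian groups, P ⊆ A a saturated submonoid, V ⊆ B a valuative submonoid, and Θ : A → B a group homomorphism with Θ(P) ⊆ V. Let K ⊆ P be a non-empty ideal of P (i.e., P + K ⊆ K) that is finitely generated as an ideal, i.e., K = ⋃_{s ∈ K₀} (s + P) for some finite non-empty K₀ ⊆ K. Then there exists a ∈ K such that Θ maps the affine blow-up monoid P[K − a] into V, where P[K − a] is the saturation in P^gp of the submonoid generated by P ∪ {x − a : x ∈ K}. -/
/-!
On `V^gp` the relation `y - x ∈ V` is a total preorder, because `V` is valuative. Hence the finite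
set of generators `K₀` contains an `a` for which `Θ a` is least: `Θ s - Θ a ∈ V` for every `s ∈ K₀`
(`exists_least_image`). Every element of `K` is a generator plus an element of `P`, so `Θ` maps
`K - a`, and with it the monoid generated by `P ∪ (K - a)`, into `V`. The passage to the saturation
costs nothing because `V` is itself saturated (`IsValuative.mem_of_nsmul_mem`).
-/

variable {G : Type*} [AddCommGroup G]

/-- A valuative submonoid is saturated: if `-x ∈ V`, then `x = n • x + (n - 1) • (-x)`. -/
theorem IsValuative.mem_of_nsmul_mem {B : Type*} [AddCommGroup B] {V : AddSubmonoid B}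
    (hV : IsValuative V) {x : B} (hx : x ∈ gp V) {n : ℕ} (hn : 1 ≤ n) (hnx : n • x ∈ V) :
    x ∈ V := by
  rcases hV x hx with h | h
  · exact h
  · obtain ⟨m, rfl⟩ := Nat.exists_eq_add_of_le' hn
    have hsum : (m + 1) • x + m • (-x) = x := by
      rw [succ_nsmul, smul_neg]
      abel
    rw [← hsum]
    exact V.add_mem hnx (V.nsmul_mem h m)

theorem exists_least_image {α B : Type*} [AddCommGroup B] {V : AddSubmonoid B}
    (hV : IsValuative V) (f : α → B) {S : Set α} (hS : S.Finite) (hne : S.Nonempty)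
    (hf : ∀ s ∈ S, f s ∈ V) : ∃ a ∈ S, ∀ s ∈ S, f s - f a ∈ V := by
  revert hne hf
  induction S, hS using Set.Finite.induction_on with
  | empty => exact fun hne => absurd hne Set.not_nonempty_empty
  | @insert b T _ _ ih =>
    intro _ hf
    rcases T.eq_empty_or_nonempty with rfl | hT
    · refine ⟨b, Set.mem_insert _ _, ?_⟩
      rintro s (rfl | hs)
      · simp
      · exact hs.elim
    · obtain ⟨a, ha, hmin⟩ := ih hT fun s hs => hf s (Set.mem_insert_of_mem b hs)
      have hgp : f b - f a ∈ gp V :=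
        (gp V).sub_mem (AddSubgroup.subset_closure (hf b (Set.mem_insert _ _)))
          (AddSubgroup.subset_closure (hf a (Set.mem_insert_of_mem b ha)))
      rcases hV _ hgp with h | h
      · refine ⟨a, Set.mem_insert_of_mem b ha, ?_⟩
        rintro s (rfl | hs)
        · exact h
        · exact hmin s hs
      · refine ⟨b, Set.mem_insert _ _, ?_⟩
        rintro s (rfl | hs)
        · simp
        · rw [neg_sub] at h
          simpa using V.add_mem (hmin s hs) h

/-- Valuative property of log blowups: let `P` be a saturated submonoid of `A`, `V` a
valuative submonoid of `B`, and `Θ : A → B` a group homomorphism with `Θ(P) ⊆ V`.  Let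
`K ⊆ P` be a non-empty finitely generated ideal of `P`.  Then there is an `a ∈ K` such
that `Θ` maps the affine blow-up monoid `P[K - a]` (the saturation in `P^gp` of the
submonoid generated by `P ∪ (K - a)`) into `V`. -/
theorem blowup_factorisation {A B : Type*} [AddCommGroup A] [AddCommGroup B]
    (P : AddSubmonoid A) (hP : IsSaturated P)
    (V : AddSubmonoid B) (hV : IsValuative V)
    (Θ : A →+ B) (hΘ : ∀ x ∈ P, Θ x ∈ V)
    (K : Set A) (hKP : K ⊆ (P : Set A))
    (hKideal : ∀ p ∈ P, ∀ k ∈ K, p + k ∈ K)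
    (K₀ : Set A) (hK₀fin : K₀.Finite) (hK₀ne : K₀.Nonempty) (hK₀K : K₀ ⊆ K)
    (hKgen : K = ⋃ s ∈ K₀, (fun p => s + p) '' (P : Set A)) :
    ∃ a ∈ K, ∀ x ∈ satIn
        (AddSubmonoid.closure ((P : Set A) ∪ (fun k => k - a) '' K)) (gp P),
      Θ x ∈ V := by
  obtain ⟨a, ha, hmin⟩ := exists_least_image hV Θ hK₀fin hK₀ne
    fun s hs => hΘ s (hKP (hK₀K hs))
  have hN : AddSubmonoid.closure ((P : Set A) ∪ (fun k => k - a) '' K) ≤ V.comap Θ := by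
    rw [AddSubmonoid.closure_le]
    rintro x (hx | ⟨k, hk, rfl⟩)
    · exact hΘ x hx
    · rw [hKgen] at hk
      simp only [Set.mem_iUnion] at hk
      obtain ⟨s, hs, p, hp, rfl⟩ := hk
      have hsum : Θ (s + p - a) = (Θ s - Θ a) + Θ p := by
        rw [map_sub, map_add]
        abel
      change Θ (s + p - a) ∈ V
      rw [hsum]
      exact V.add_mem (hmin s hs) (hΘ p hp)
  have hgp : gp P ≤ (gp V).comap Θ :=
    (AddSubgroup.closure_le _).2 fun x hx => AddSubgroup.subset_closure (hΘ x hx)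
  refine ⟨a, hK₀K ha, ?_⟩
  rintro x ⟨hx, n, hn, hnx⟩
  refine hV.mem_of_nsmul_mem (hgp hx) hn ?_
  rw [← map_nsmul]
  exact hN hnx
end

section
/- Let G be an abelian group, V ⊆ G a valuative submonoid, and P ⊆ G a saturated submonoid containing V that is finitely generated over V, i.e., P is generated as a monoid by V ∪ S for some finite S ⊆ P. Then P is finitely presented over V: there exist n : ℕ, a surjective monoid homomorphism π : V × (Fin n → ℕ) → P with π(v, 0) = v for all v ∈ V, and a finite set R of pairs of elements of V × (Fin n → ℕ) such that the kernel congruence of π is the additive congruence generated by R. -/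
/-!
Write `σ : ℕⁿ → G` for the additive map given by the generators, so that `π (v, a) = v + σ a`.
The proof is a Gröbner basis argument, carried out after homogenizing.

Since `V` is valuative, exponents `a, b` with `σ b - σ a ∈ V^gp` are comparable: declare `a` smaller
than `b` when `σ b - σ a ∈ V`, and break ties lexicographically (`Below`). This is a translation
invariant strict order, total on each class modulo `V^gp`, and `a` below `b` yields a rewriting rule
`(0, b) → (σ b - σ a, a)` with coefficient in `V`. The order need not be well-founded on `ℕⁿ`.
It is on the finite set of exponents of degree at most `m`, so the degree bound is carried along: a
pair `(k, b) ∈ ℕ × ℕⁿ`, where `k` is the slack `m - deg b`, is reducible when some `a` of degree at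
most `k + deg b` lies below `b`. Dickson's lemma provides finitely many minimal reducible pairs
(`exists_finite_rules`). A rule for a minimal pair, translated, applies to every pair above it and
respects the same degree bound, so these finitely many rules generate. Indeed each `(u, c)` with
`deg c ≤ m` is congruent to some `(w, d)` with `d` irreducible in degree at most `m`
(`exists_irreducible`). Two such irreducible forms, for the same `m` and with the same image under
`π`, have comparable exponents, hence equal exponents, hence equal coefficients by cancellation.
-/

variable {G : Type*} [AddCommGroup G]

namespace ValuativeNagata

/-- The strict order on exponents: `a` is below `b` if `σ b - σ a ∈ V`, where ties (the case in
which also `σ a - σ b ∈ V`) are broken by the lexicographic order. -/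
def Below (V : AddSubmonoid G) {n : ℕ} (σ : (Fin n → ℕ) →+ G) (a b : Fin n → ℕ) : Prop :=
  σ b - σ a ∈ V ∧ (σ a - σ b ∈ V → toLex a < toLex b)

/-- The total degree of an exponent. -/
def deg {n : ℕ} (a : Fin n → ℕ) : ℕ := ∑ i, a i

theorem deg_add {n : ℕ} (a b : Fin n → ℕ) : deg (a + b) = deg a + deg b := by
  simp [deg, Finset.sum_add_distrib]

variable {V : AddSubmonoid G} {n : ℕ} {σ : (Fin n → ℕ) →+ G}

theorem Below.irrefl (a : Fin n → ℕ) : ¬ Below V σ a a := fun h =>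
  lt_irrefl _ (h.2 h.1)

theorem Below.trans {a b c : Fin n → ℕ} (h₁ : Below V σ a b) (h₂ : Below V σ b c) :
    Below V σ a c := by
  refine ⟨?_, fun h => ?_⟩
  · simpa using V.add_mem h₂.1 h₁.1
  · have hab : σ a - σ b ∈ V := by simpa using V.add_mem h h₂.1
    have hbc : σ b - σ c ∈ V := by simpa [add_comm] using V.add_mem h₁.1 h
    exact (h₁.2 hab).trans (h₂.2 hbc)

theorem Below.add_right {a b : Fin n → ℕ} (h : Below V σ a b) (e : Fin n → ℕ) :
    Below V σ (a + e) (b + e) := by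
  refine ⟨?_, fun h' => ?_⟩
  · simpa using h.1
  · have hlt : toLex a < toLex b := h.2 (by simpa using h')
    rw [toLex_add, toLex_add]
    exact add_lt_add_left hlt _

theorem below_total (hV : IsValuative V) {a b : Fin n → ℕ} (h : σ b - σ a ∈ gp V) :
    Below V σ a b ∨ a = b ∨ Below V σ b a := by
  by_cases h₁ : σ b - σ a ∈ V
  · by_cases h₂ : σ a - σ b ∈ V
    · rcases lt_trichotomy (toLex a) (toLex b) with hlt | heq | hlt
      · exact .inl ⟨h₁, fun _ => hlt⟩
      · exact .inr (.inl (toLex.injective heq))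
      · exact .inr (.inr ⟨h₂, fun _ => hlt⟩)
    · exact .inl ⟨h₁, fun h' => absurd h' h₂⟩
  · have h₂ : σ a - σ b ∈ V := by simpa using (hV _ h).resolve_left h₁
    exact .inr (.inr ⟨h₂, fun h' => absurd h' h₁⟩)

/-- The pair `(k, b)` is reducible if some exponent below `b` has degree at most `k + deg b`. -/
def Reducible (V : AddSubmonoid G) (σ : (Fin n → ℕ) →+ G) (p : ℕ × (Fin n → ℕ)) : Prop :=
  ∃ a, deg a ≤ p.1 + deg p.2 ∧ Below V σ a p.2

/-- Dickson's lemma: every reducible pair lies above one of finitely many reducible pairs. -/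
theorem exists_finite_rules (V : AddSubmonoid G) (σ : (Fin n → ℕ) →+ G) :
    ∃ B : Set (ℕ × (Fin n → ℕ)), B.Finite ∧ (∀ p ∈ B, Reducible V σ p) ∧
      ∀ p, Reducible V σ p → ∃ q ∈ B, q ≤ p := by
  refine ⟨{p | Minimal (Reducible V σ) p}, ?_, fun p hp => hp.prop, fun p hp => ?_⟩
  · exact WellQuasiOrderedLE.finite_of_isAntichain (setOfPred_minimal_antichain _)
  · obtain ⟨q, hq, hmin⟩ := exists_minimal_le_of_wellFoundedLT _ p hp
    exact ⟨q, hmin, hq⟩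

/-- Normal forms in bounded degree. If a congruence contains a rewriting rule for each member of a
set `B`, and every reducible pair lies above a member of `B`, then every `(u, c)` with `deg c ≤ m` is
congruent to some `(w, d)` such that nothing of degree at most `m` is below `d`. -/
theorem exists_irreducible (C : AddCon (↥V × (Fin n → ℕ))) (B : Set (ℕ × (Fin n → ℕ)))
    (hB : ∀ p, Reducible V σ p → ∃ q ∈ B, q ≤ p)
    (hC : ∀ q ∈ B, ∃ (a : Fin n → ℕ) (v : ↥V), deg a ≤ q.1 + deg q.2 ∧ Below V σ a q.2 ∧
      C (0, q.2) (v, a))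
    (m : ℕ) (u : ↥V) (c : Fin n → ℕ) (hc : deg c ≤ m) :
    ∃ (w : ↥V) (d : Fin n → ℕ), deg d ≤ m ∧ C (u, c) (w, d) ∧
      ∀ a, deg a ≤ m → ¬ Below V σ a d := by
  let T := {c : Fin n → ℕ // deg c ≤ m}
  have hT : Finite T := by
    refine Set.Finite.subset (Set.finite_Iic (fun _ : Fin n => m)) fun c hc i => ?_
    exact (Finset.single_le_sum (fun _ _ => Nat.zero_le _) (Finset.mem_univ i)).trans hc
  let r : T → T → Prop := fun a b => Below V σ a.1 b.1
  have : IsTrans T r := ⟨fun _ _ _ h₁ h₂ => Below.trans h₁ h₂⟩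
  have : Std.Irrefl r := ⟨fun a => Below.irrefl a.1⟩
  have wf : WellFounded r := Finite.wellFounded_of_trans_of_irrefl r
  suffices H : ∀ (c : T) (u : ↥V), ∃ (w : ↥V) (d : Fin n → ℕ), deg d ≤ m ∧ C (u, c.1) (w, d) ∧
      ∀ a, deg a ≤ m → ¬ Below V σ a d from H ⟨c, hc⟩ u
  intro c
  induction c using wf.induction with
  | _ c ih =>
  intro u
  by_cases hred : Reducible V σ (m - deg c.1, c.1)
  · obtain ⟨q, hqB, hqle⟩ := hB _ hred
    obtain ⟨a, v, hdeg, hlt, hrel⟩ := hC q hqB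
    obtain ⟨e, he⟩ : ∃ e, c.1 = q.2 + e := ⟨c.1 - q.2, (add_tsub_cancel_of_le hqle.2).symm⟩
    have h₁ : q.1 ≤ m - deg c.1 := hqle.1
    have h₂ : deg c.1 ≤ m := c.2
    have h₃ : deg c.1 = deg q.2 + deg e := by rw [he, deg_add]
    have hle : deg (a + e) ≤ m := by rw [deg_add]; omega
    obtain ⟨w, d, hd, hCd, hirr⟩ := ih ⟨a + e, hle⟩
      (show Below V σ (a + e) c.1 from he ▸ hlt.add_right e) (v + u)
    refine ⟨w, d, hd, C.trans ?_ hCd, hirr⟩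
    -- The rule `(0, q.2) ~ (v, a)`, translated by `(u, e)`.
    have := C.add hrel (C.refl (u, e))
    simpa [he] using this
  · refine ⟨u, c.1, c.2, C.refl _, fun a ha hlt => hred ⟨a, ?_, hlt⟩⟩
    have : deg c.1 ≤ m := c.2
    show deg a ≤ m - deg c.1 + deg c.1
    omega

/-- Any homomorphism of the form `(v, a) ↦ v + σ a` has finitely generated kernel congruence. -/
theorem exists_finite_relations {P : AddSubmonoid G} (hV : IsValuative V)
    (π : (↥V × (Fin n → ℕ)) →+ ↥P) (hπ : ∀ x, ((π x : ↥P) : G) = (x.1 : G) + σ x.2) :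
    ∃ R : Set ((↥V × (Fin n → ℕ)) × (↥V × (Fin n → ℕ))),
      R.Finite ∧ AddCon.ker π = addConGen (fun x y => (x, y) ∈ R) := by
  obtain ⟨B, hBfin, hBred, hB⟩ := exists_finite_rules V σ
  have hrule : ∀ q : ℕ × (Fin n → ℕ), ∃ a : Fin n → ℕ, ∃ v : ↥V, q ∈ B →
      deg a ≤ q.1 + deg q.2 ∧ Below V σ a q.2 ∧ (v : G) = σ q.2 - σ a := by
    intro q
    by_cases hq : q ∈ B
    · obtain ⟨a, hdeg, hlt⟩ := hBred q hq
      exact ⟨a, ⟨_, hlt.1⟩, fun _ => ⟨hdeg, hlt, rfl⟩⟩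
    · exact ⟨0, 0, fun h => absurd h hq⟩
  choose a v hav using hrule
  let R := (fun q => (((0 : ↥V), q.2), (v q, a q))) '' B
  set C := addConGen (fun x y => (x, y) ∈ R)
  have hker : C ≤ AddCon.ker π := by
    refine AddCon.addConGen_le.2 ?_
    rintro x y ⟨q, hq, hxy⟩
    obtain ⟨rfl, rfl⟩ := Prod.mk.inj hxy
    refine (AddCon.ker_rel π).2 (Subtype.ext ?_)
    simp [hπ, (hav q hq).2.2]
  have hC : ∀ q ∈ B, ∃ (a : Fin n → ℕ) (v : ↥V), deg a ≤ q.1 + deg q.2 ∧ Below V σ a q.2 ∧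
      C (0, q.2) (v, a) := fun q hq =>
    ⟨a q, v q, (hav q hq).1, (hav q hq).2.1, AddConGen.Rel.of _ _ ⟨q, hq, rfl⟩⟩
  refine ⟨R, hBfin.image _, le_antisymm ?_ hker⟩
  intro x y hxy
  obtain ⟨w, d, hd, hxd, hdirr⟩ := exists_irreducible C B hB hC (max (deg x.2) (deg y.2))
    x.1 x.2 (le_max_left _ _)
  obtain ⟨w', d', hd', hyd, hdirr'⟩ := exists_irreducible C B hB hC (max (deg x.2) (deg y.2))
    y.1 y.2 (le_max_right _ _)
  have hval : (w : G) + σ d = w' + σ d' := by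
    have h₁ : π x = π (w, d) := hker hxd
    have h₂ : π y = π (w', d') := hker hyd
    have h₃ : π x = π y := hxy
    have := congrArg (Subtype.val) (h₁.symm.trans (h₃.trans h₂))
    simpa only [hπ] using this
  have hgp : σ d' - σ d ∈ gp V := by
    have : σ d' - σ d = w - w' := by
      rw [sub_eq_sub_iff_add_eq_add, add_comm, ← hval]
    rw [this]
    exact (gp V).sub_mem (AddSubgroup.subset_closure w.2) (AddSubgroup.subset_closure w'.2)
  have hdd : d = d' := ((below_total hV hgp).resolve_left (hdirr' d hd)).resolve_right
    (hdirr d' hd')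
  subst hdd
  have hww : w = w' := Subtype.ext (add_right_cancel hval)
  subst hww
  exact C.trans hxd (C.symm hyd)

end ValuativeNagata

/-- Monoid analogue of Nagata's theorem: let `V` be a valuative submonoid of an abelian
group `G` and `P ⊇ V` a saturated submonoid generated as a monoid by `V ∪ S` for a finite
set `S`.  Then `P` is finitely presented over `V`: there are `n : ℕ`, a surjective
homomorphism `π : V × ℕⁿ → P` restricting to the inclusion on `V`, and a finite set `R`
of relations generating the kernel congruence of `π`. -/
theorem valuative_nagata (V P : AddSubmonoid G)
    (hV : IsValuative V) (hP : IsSaturated P) (hVP : V ≤ P)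
    (S : Set G) (hSfin : S.Finite) (hSP : S ⊆ (P : Set G))
    (hgen : P = AddSubmonoid.closure ((V : Set G) ∪ S)) :
    ∃ (n : ℕ) (π : (↥V × (Fin n → ℕ)) →+ ↥P),
      Function.Surjective π ∧ (∀ v : ↥V, ((π (v, 0) : ↥P) : G) = (v : G)) ∧
      ∃ R : Set ((↥V × (Fin n → ℕ)) × (↥V × (Fin n → ℕ))),
        R.Finite ∧ AddCon.ker π = addConGen (fun x y => (x, y) ∈ R) := by
  obtain ⟨n, s, hs⟩ : ∃ (n : ℕ) (s : Fin n → G), Set.range s = S := by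
    obtain ⟨n, s, -, hs⟩ := hSfin.fin_param
    exact ⟨n, s, hs⟩
  let σ : (Fin n → ℕ) →+ G := (Fintype.linearCombination ℕ s).toAddMonoidHom
  have hσ : ∀ a, σ a = ∑ i, a i • s i := fun a => Fintype.linearCombination_apply ℕ s a
  have hσP : ∀ a, σ a ∈ P := fun a => by
    rw [hσ]
    exact P.sum_mem fun i _ => P.nsmul_mem (hSP (hs ▸ Set.mem_range_self i)) _
  let φ : (↥V × (Fin n → ℕ)) →+ G := V.subtype.coprod σ
  have hφ : ∀ x, φ x = (x.1 : G) + σ x.2 := fun x => rfl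
  let π : (↥V × (Fin n → ℕ)) →+ ↥P :=
    φ.codRestrict P fun x => P.add_mem (hVP x.1.2) (hσP x.2)
  have hπ : ∀ x, ((π x : ↥P) : G) = (x.1 : G) + σ x.2 := fun x => rfl
  refine ⟨n, π, ?_, fun v => by simp [hπ], ValuativeNagata.exists_finite_relations hV π hπ⟩
  have hle : P ≤ AddMonoidHom.mrange φ := by
    rw [hgen, AddSubmonoid.closure_le]
    rintro x (hx | hx)
    · exact ⟨(⟨x, hx⟩, 0), by simp [hφ]⟩
    · obtain ⟨i, rfl⟩ := hs.symm ▸ hx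
      exact ⟨(0, Pi.single i 1), by simp [hφ, hσ, Pi.single_apply]⟩
  rintro ⟨x, hx⟩
  obtain ⟨y, hy⟩ := hle hx
  exact ⟨y, Subtype.ext hy⟩
end

section
/- Let G be an abelian group and V ⊆ W ⊆ G submonoids such that V is valuative, W is saturated, and W^gp/V^gp is torsion (for every w ∈ W^gp there exists an integer n ≥ 1 with n•w ∈ V^gp). Then: (i) W is valuative; (ii) the monoid algebra AddMonoidAlgebra ℤ W is flat as a module over AddMonoidAlgebra ℤ V via the ring homomorphism induced by the inclusion V ⊆ W. -/
/-!
`W` is valuative because a multiple `n • x` of any `x ∈ W^gp` lies in `V^gp`, so `n • x` or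
`-(n • x)` lies in `V ⊆ W`, and saturation of `W` removes the factor `n`.

For flatness, decompose `W` into its intersections with the cosets of `V^gp`. Two elements
`s, t ∈ W` of the same coset satisfy `s ∈ t + V` or `t ∈ s + V` since `V` is valuative. So each
finite `S ⊆ W` is contained in `⋃ t ∈ T, t + V` for a finite `T ⊆ W` whose elements are pairwise
incongruent modulo `V^gp` (`exists_representatives`). The translates `t + V`, `t ∈ T`, are disjoint
and free over `V`, so the monomials of `T` are linearly independent over `ℤ[V]`
(`linearIndependent_monomials`). Thus every finite family in `ℤ[W]` lies in a finitely generated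
free submodule, and such a module is flat by the equational criterion
(`flat_of_forall_exists_linearIndependent`).
-/

variable {G : Type*} [AddCommGroup G]

/-- A module in which each finite family lies in the span of a finite linearly independent family
is flat: expanding a relation in the independent family shows that it is trivial. -/
lemma flat_of_forall_exists_linearIndependent {R M : Type*} [CommRing R] [AddCommGroup M]
    [Module R M]
    (h : ∀ (l : ℕ) (x : Fin l → M), ∃ (k : ℕ) (y : Fin k → M), LinearIndependent R y ∧
      ∀ i, x i ∈ Submodule.span R (Set.range y)) : Module.Flat R M := by
  refine Module.Flat.of_forall_isTrivialRelation fun {l f x} hfx => ?_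
  obtain ⟨k, y, hy, hx⟩ := h l x
  choose a ha using fun i => (Submodule.mem_span_range_iff_exists_fun R).1 (hx i)
  refine ⟨k, a, y, fun i => (ha i).symm, fun j => ?_⟩
  refine Fintype.linearIndependent_iff.1 hy (fun j => ∑ i, f i * a i j) ?_ j
  rw [← hfx]
  simp_rw [← ha, Finset.smul_sum, Finset.sum_smul, mul_smul]
  exact Finset.sum_comm

lemma isValuative_of_saturated_of_torsion {V W : AddSubmonoid G} (hVW : V ≤ W)
    (hV : IsValuative V) (hW : IsSaturated W)
    (htors : ∀ w ∈ gp W, ∃ n : ℕ, 1 ≤ n ∧ n • w ∈ gp V) : IsValuative W := by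
  have hsat : ∀ x ∈ gp W, ∀ n : ℕ, 1 ≤ n → n • x ∈ W → x ∈ W := fun x hx n hn hnx => by
    rw [← SetLike.mem_coe, hW]
    exact ⟨hx, n, hn, hnx⟩
  intro x hx
  obtain ⟨n, hn, hnx⟩ := htors x hx
  rcases hV _ hnx with h | h
  · exact .inl (hsat x hx n hn (hVW h))
  · exact .inr (hsat (-x) (neg_mem hx) n hn (by simpa using hVW h))

/-- For `V` valuative, each finite set is covered by finitely many translates `t + V`, with `t` in
pairwise distinct cosets of `V^gp`: the cosets that the set meets are represented by minimal
elements of it, for the preorder `s ≤ s' ↔ s' - s ∈ V`. -/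
lemma exists_representatives {V W : AddSubmonoid G} (hV : IsValuative V) (S : Finset W) :
    ∃ T : Finset W, (∀ t ∈ T, ∀ t' ∈ T, (t - t' : G) ∈ gp V → t = t') ∧
      ∀ s ∈ S, ∃ t ∈ T, (s - t : G) ∈ V := by
  classical
  induction S using Finset.induction_on with
  | empty => exact ⟨∅, by simp, by simp⟩
  | insert s S _ ih =>
    obtain ⟨T, hT, hS⟩ := ih
    by_cases hs : ∃ t ∈ T, (s - t : G) ∈ gp V
    · obtain ⟨t, ht, hst⟩ := hs
      rcases hV _ hst with h | h
      · refine ⟨T, hT, fun s' hs' => ?_⟩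
        rcases Finset.mem_insert.1 hs' with rfl | hs'
        · exact ⟨t, ht, h⟩
        · exact hS s' hs'
      · -- `t ∈ s + V`, so `s` takes over from `t` as the representative of their coset.
        rw [neg_sub] at h
        have hgp : ∀ u ∈ T, (s - u : G) ∈ gp V → u = t := fun u hu hsu => hT u hu t ht (by
          have := sub_mem hst hsu
          rwa [sub_sub_sub_cancel_left] at this)
        have hgp' : ∀ u ∈ T, (u - s : G) ∈ gp V → u = t := fun u hu hsu =>
          hgp u hu (by simpa using neg_mem hsu)
        refine ⟨insert s (T.erase t), ?_, fun s' hs' => ?_⟩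
        · simp only [Finset.mem_insert, Finset.mem_erase]
          rintro a (rfl | ⟨hat, ha⟩) b (rfl | ⟨hbt, hb⟩) hab
          · rfl
          · exact absurd (hgp b hb hab) hbt
          · exact absurd (hgp' a ha hab) hat
          · exact hT a ha b hb hab
        · rcases Finset.mem_insert.1 hs' with rfl | hs'
          · exact ⟨s', by simp, by simp⟩
          · obtain ⟨u, hu, hsu⟩ := hS s' hs'
            by_cases hut : u = t
            · subst hut
              exact ⟨s, by simp, by simpa using add_mem hsu h⟩
            · exact ⟨u, by simp [hu, hut], hsu⟩
    · push Not at hs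
      have hs' : ∀ u ∈ T, (u - s : G) ∉ gp V := fun u hu h =>
        hs u hu (by simpa using neg_mem h)
      refine ⟨insert s T, ?_, fun s' hs' => ?_⟩
      · simp only [Finset.mem_insert]
        rintro a (rfl | ha) b (rfl | hb) hab
        · rfl
        · exact absurd hab (hs b hb)
        · exact absurd hab (hs' a ha)
        · exact hT a ha b hb hab
      · rcases Finset.mem_insert.1 hs' with rfl | hs'
        · exact ⟨s', by simp, by simp⟩
        · obtain ⟨u, hu, hsu⟩ := hS s' hs'
          exact ⟨u, by simp [hu], hsu⟩

/-- `ℤ[W]` as a `ℤ[V]`-module along the inclusion `V ⊆ W`. -/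
noncomputable abbrev inclusionModule {V W : AddSubmonoid G} (hVW : V ≤ W) :
    Module (AddMonoidAlgebra ℤ V) (AddMonoidAlgebra ℤ W) :=
  RingHom.toModule (AddMonoidAlgebra.mapDomainRingHom ℤ (AddSubmonoid.inclusion hVW))

section

variable {V W : AddSubmonoid G} (hVW : V ≤ W)

lemma inclusionModule_single_smul (v : V) (r : ℤ) (w : W) :
    letI := inclusionModule hVW
    (AddMonoidAlgebra.single v r : AddMonoidAlgebra ℤ V) •
      (AddMonoidAlgebra.single w 1 : AddMonoidAlgebra ℤ W) =
      AddMonoidAlgebra.single (AddSubmonoid.inclusion hVW v + w) r := by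
  let := inclusionModule hVW
  change AddMonoidAlgebra.mapDomainRingHom ℤ (AddSubmonoid.inclusion hVW) _ * _ = _
  simp [AddMonoidAlgebra.single_mul_single]

/-- Multiplication by a monomial `w` translates coefficients. -/
lemma coeff_smul_single_add (a : AddMonoidAlgebra ℤ V) (v : V) (w : W) :
    letI := inclusionModule hVW
    (a • (AddMonoidAlgebra.single w 1 : AddMonoidAlgebra ℤ W)).coeff
      (AddSubmonoid.inclusion hVW v + w) = a.coeff v := by
  classical
  let := inclusionModule hVW
  induction a using AddMonoidAlgebra.induction_linear with
  | zero => simp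
  | add a b ha hb => simp only [add_smul, AddMonoidAlgebra.coeff_add, Finsupp.add_apply, ha, hb]
  | single v' r =>
    rw [inclusionModule_single_smul]
    rw [AddMonoidAlgebra.coeff_single, AddMonoidAlgebra.coeff_single, Finsupp.single_apply,
      Finsupp.single_apply]
    refine if_congr ?_ rfl rfl
    simp only [Subtype.ext_iff, AddSubmonoid.coe_inclusion, add_left_inj]

/-- Multiples of the monomial `w` are supported in the coset of `w` modulo `V^gp`. -/
lemma coeff_smul_single_of_notMem (a : AddMonoidAlgebra ℤ V) (u w : W)
    (h : (u - w : G) ∉ gp V) :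
    letI := inclusionModule hVW
    (a • (AddMonoidAlgebra.single w 1 : AddMonoidAlgebra ℤ W)).coeff u = 0 := by
  classical
  let := inclusionModule hVW
  induction a using AddMonoidAlgebra.induction_linear with
  | zero => simp
  | add a b ha hb => simp only [add_smul, AddMonoidAlgebra.coeff_add, Finsupp.add_apply, ha, hb,
      add_zero]
  | single v r =>
    rw [inclusionModule_single_smul, AddMonoidAlgebra.coeff_single, Finsupp.single_apply, if_neg]
    rintro rfl
    have hv : (v : G) ∈ gp V := AddSubgroup.subset_closure v.2
    exact h (by simpa using hv)

/-- Monomials with exponents pairwise incongruent modulo `V^gp` are independent over `ℤ[V]`. -/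
lemma linearIndependent_monomials (T : Finset W)
    (hT : ∀ t ∈ T, ∀ t' ∈ T, (t - t' : G) ∈ gp V → t = t') :
    letI := inclusionModule hVW
    LinearIndependent (AddMonoidAlgebra ℤ V)
      (fun t : T => (AddMonoidAlgebra.single (t : W) 1 : AddMonoidAlgebra ℤ W)) := by
  let := inclusionModule hVW
  refine Fintype.linearIndependent_iff.2 fun g hg i => ?_
  ext v
  have h := congrArg (fun p => p.coeff (AddSubmonoid.inclusion hVW v + i)) hg
  simp only [AddMonoidAlgebra.coeff_sum, Finsupp.finsetSum_apply] at h
  rw [Finset.sum_eq_single i] at h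
  · simpa [coeff_smul_single_add] using h
  · intro j _ hji
    refine coeff_smul_single_of_notMem hVW _ _ _ fun hmem => hji ?_
    refine Subtype.ext (hT i i.2 j j.2 ?_).symm
    have := sub_mem hmem (AddSubgroup.subset_closure v.2 : (v : G) ∈ gp V)
    convert this using 1
    simp only [AddSubmonoid.coe_add, AddSubmonoid.coe_inclusion]
    abel
  · simp

end

/-- Kummer étale extension of a valuative monoid: let `V ⊆ W` be submonoids of an abelian
group `G` with `V` valuative, `W` saturated, and `W^gp/V^gp` torsion.  Then `W` is
valuative and `ℤ[W]` is flat over `ℤ[V]` via the ring homomorphism induced by the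
inclusion `V ⊆ W`. -/
theorem kummer_of_valuative_flat (V W : AddSubmonoid G) (hVW : V ≤ W)
    (hV : IsValuative V) (hW : IsSaturated W)
    (htors : ∀ w ∈ gp W, ∃ n : ℕ, 1 ≤ n ∧ n • w ∈ gp V) :
    IsValuative W ∧
      @Module.Flat (AddMonoidAlgebra ℤ ↥V) (AddMonoidAlgebra ℤ ↥W) _ _
        (RingHom.toModule (AddMonoidAlgebra.mapDomainRingHom ℤ (AddSubmonoid.inclusion hVW))) := by
  classical
  refine ⟨isValuative_of_saturated_of_torsion hVW hV hW htors, ?_⟩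
  let := inclusionModule hVW
  refine flat_of_forall_exists_linearIndependent fun l x => ?_
  obtain ⟨T, hT, hS⟩ := exists_representatives hV
    (Finset.univ.biUnion fun i => (x i).coeff.support)
  refine ⟨T.card, _, (linearIndependent_monomials hVW T hT).comp T.equivFin.symm
    T.equivFin.symm.injective, fun i => ?_⟩
  rw [T.equivFin.symm.surjective.range_comp]
  have hsum : x i = ∑ s ∈ (x i).coeff.support, AddMonoidAlgebra.single s ((x i).coeff s) := by
    apply AddMonoidAlgebra.coeff_injective
    rw [AddMonoidAlgebra.coeff_sum]
    exact (Finsupp.sum_single (x i).coeff).symm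
  rw [hsum]
  refine Submodule.sum_mem _ fun s hs => ?_
  obtain ⟨t, ht, hst⟩ := hS s (Finset.mem_biUnion.2 ⟨i, Finset.mem_univ i, hs⟩)
  have hs' : s = AddSubmonoid.inclusion hVW ⟨_, hst⟩ + t := Subtype.ext (by simp)
  have key := inclusionModule_single_smul hVW ⟨_, hst⟩ ((x i).coeff s) t
  rw [← hs'] at key
  rw [← key]
  exact Submodule.smul_mem _ _ (Submodule.subset_span ⟨⟨t, ht⟩, rfl⟩)
end

section
/- Let A and B be abelian groups, P ⊆ A a submonoid with A = P^gp, Q ⊆ B a saturated submonoid with B = Q^gp, and u : A → B a group homomorphism satisfying u(P) ⊆ Q and with torsion cokernel (for every b ∈ B there is an integer n ≥ 1 with n•b ∈ u(A)). Let D = (B × B)/N with N = {(u a, −u a) : a ∈ A} (the pushout B ⊕_A B), with canonical maps j₁, j₂ : B → D. Then: (i) the map ψ : D → B × (B/u(A)) induced by (b₁, b₂) ↦ (b₁ + b₂, b₂ + u(A)) is a well-defined group isomorphism; (ii) ψ carries the saturation in D of the submonoid j₁(Q) + j₂(Q) — which is the saturated pushout (Q ⊕_P Q)^sat — onto the submonoid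 Q × (B/u(A)) of B × (B/u(A)), where Q is viewed inside B. -/
/-!
The map `(b₁, b₂) ↦ (b₁ + b₂, b₂ + u(A))` from `B × B` is surjective with kernel
`{(u a, -u a)}` (`shear_surjective`, `ker_shear`), so it induces the isomorphism `ψ`.

For the saturation: if `n • (b₁, b₂)` is congruent to `(q₁, q₂)` with `q₁, q₂ ∈ Q`, then
`n • (b₁ + b₂) = q₁ + q₂ ∈ Q`, so `b₁ + b₂ ∈ Q` because `Q` is saturated. Conversely, given
`q ∈ Q` and `b ∈ B`, choose `n ≥ 1` with `n • b = u a`. The preimage `(q - b, b)` of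
`(q, b + u(A))` satisfies `n • (q - b, b) = (n • q, 0) - (u a, -u a)`, which is congruent to
`(n • q, 0)` and hence lies in `j₁(Q)`.
-/

variable {G : Type*} [AddCommGroup G]

/-- The homomorphism `(b₁, b₂) ↦ (b₁ + b₂, b₂ + H)` from `B × B` to `B × B/H`. -/
def shear {B : Type*} [AddCommGroup B] (H : AddSubgroup B) : B × B →+ B × (B ⧸ H) :=
  (AddMonoidHom.fst B B + AddMonoidHom.snd B B).prod
    ((QuotientAddGroup.mk' H).comp (AddMonoidHom.snd B B))

theorem shear_apply {B : Type*} [AddCommGroup B] (H : AddSubgroup B) (b₁ b₂ : B) :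
    shear H (b₁, b₂) = (b₁ + b₂, QuotientAddGroup.mk' H b₂) := rfl

theorem shear_surjective {B : Type*} [AddCommGroup B] (H : AddSubgroup B) :
    Function.Surjective (shear H) := by
  rintro ⟨b, c⟩
  obtain ⟨b₂, rfl⟩ := QuotientAddGroup.mk'_surjective H c
  exact ⟨(b - b₂, b₂), by rw [shear_apply, sub_add_cancel]⟩

theorem ker_shear {A B : Type*} [AddCommGroup A] [AddCommGroup B] (u : A →+ B) :
    (shear u.range).ker = (u.prod (-u)).range := by
  ext ⟨b₁, b₂⟩
  rw [AddMonoidHom.mem_ker, shear_apply, Prod.mk_eq_zero, QuotientAddGroup.mk'_apply,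
    QuotientAddGroup.eq_zero_iff]
  constructor
  · rintro ⟨h, a, rfl⟩
    refine ⟨-a, Prod.ext ?_ ?_⟩
    · simpa using (eq_neg_of_add_eq_zero_left h).symm
    · simp
  · rintro ⟨a, h⟩
    obtain ⟨rfl, rfl⟩ := Prod.mk.inj h
    exact ⟨by simp, -a, by simp⟩

/-- Vidal's lemma for saturated monoids.  Let `P ⊆ A` with `A = P^gp`, `Q ⊆ B` saturated
with `B = Q^gp`, and `u : A → B` a homomorphism with `u(P) ⊆ Q` and torsion cokernel.
Let `D = (B × B)/N` with `N = {(u a, -u a)}` (the pushout `B ⊕_A B`), with canonical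
maps `j₁, j₂ : B → D`.  Then `(b₁, b₂) ↦ (b₁ + b₂, b₂ + u(A))` induces an isomorphism
`ψ : D ≃ B × (B/u(A))` carrying the saturation of the submonoid `j₁(Q) + j₂(Q)` —
the saturated pushout `(Q ⊕_P Q)^sat` — onto `Q × (B/u(A))`. -/
theorem vidal_lemma {A B : Type*} [AddCommGroup A] [AddCommGroup B]
    (P : AddSubmonoid A) (hPgp : gp P = ⊤)
    (Q : AddSubmonoid B) (hQ : IsSaturated Q) (hQgp : gp Q = ⊤)
    (u : A →+ B) (huP : ∀ a ∈ P, u a ∈ Q)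
    (htors : ∀ b : B, ∃ n : ℕ, 1 ≤ n ∧ n • b ∈ u.range)
    (N : AddSubgroup (B × B)) (hN : N = (u.prod (-u)).range)
    (j₁ j₂ : B →+ (B × B) ⧸ N)
    (hj₁ : j₁ = (QuotientAddGroup.mk' N).comp (AddMonoidHom.inl B B))
    (hj₂ : j₂ = (QuotientAddGroup.mk' N).comp (AddMonoidHom.inr B B)) :
    ∃ ψ : ((B × B) ⧸ N) ≃+ B × (B ⧸ u.range),
      (∀ b₁ b₂ : B, ψ (QuotientAddGroup.mk' N (b₁, b₂)) =
        (b₁ + b₂, QuotientAddGroup.mk' u.range b₂)) ∧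
      (⇑ψ) '' {x : (B × B) ⧸ N | ∃ n : ℕ, 1 ≤ n ∧ n • x ∈ Q.map j₁ ⊔ Q.map j₂} =
        {p : B × (B ⧸ u.range) | p.1 ∈ Q} := by
  subst hj₁ hj₂
  have hker : N = (shear u.range).ker := hN.trans (ker_shear u).symm
  let ψ : ((B × B) ⧸ N) ≃+ B × (B ⧸ u.range) :=
    QuotientAddGroup.liftEquiv N (shear_surjective u.range) hker
  have hψ : ∀ b₁ b₂ : B, ψ (QuotientAddGroup.mk' N (b₁, b₂)) =
      (b₁ + b₂, QuotientAddGroup.mk' u.range b₂) := fun _ _ => rfl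
  refine ⟨ψ, hψ, Set.Subset.antisymm ?_ ?_⟩
  · rintro _ ⟨x, ⟨n, hn, hx⟩, rfl⟩
    obtain ⟨_, ⟨q₁, hq₁, rfl⟩, _, ⟨q₂, hq₂, rfl⟩, h⟩ := AddSubmonoid.mem_sup.1 hx
    have h₁ : n • (ψ x).1 = q₁ + q₂ := by
      have h₂ := congrArg (fun y => (ψ y).1) h
      simp only [AddMonoidHom.comp_apply, AddMonoidHom.inl_apply, AddMonoidHom.inr_apply,
        map_add, map_nsmul, hψ, Prod.fst_add, Prod.smul_fst, add_zero, zero_add] at h₂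
      exact h₂.symm
    have hmem : (ψ x).1 ∈ satIn Q (gp Q) :=
      ⟨hQgp ▸ AddSubgroup.mem_top _, n, hn, h₁ ▸ Q.add_mem hq₁ hq₂⟩
    rw [← hQ] at hmem
    exact hmem
  · rintro ⟨q, c⟩ hq
    obtain ⟨b, rfl⟩ := QuotientAddGroup.mk'_surjective u.range c
    obtain ⟨n, hn, hb⟩ := htors b
    refine ⟨QuotientAddGroup.mk' N (q - b, b), ⟨n, hn, ?_⟩, by rw [hψ, sub_add_cancel]⟩
    refine AddSubmonoid.mem_sup_left ⟨n • q, Q.nsmul_mem hq n, ?_⟩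
    -- Equality in the quotient is checked after applying `ψ`, where `n • b` vanishes.
    apply ψ.injective
    have hb0 : n • QuotientAddGroup.mk' u.range b = 0 := by
      rw [← map_nsmul]
      exact (QuotientAddGroup.eq_zero_iff _).2 hb
    rw [map_nsmul ψ, hψ, map_nsmul, map_nsmul ψ, AddMonoidHom.comp_apply, AddMonoidHom.inl_apply, hψ, sub_add_cancel,
      add_zero, map_zero, Prod.smul_mk, Prod.smul_mk, hb0, smul_zero]
end

section
/- Let G be an abelian group and P ⊆ Q ⊆ G submonoids such that Q is saturated, P = Q ∩ P^gp, and the quotient group Q^gp/P^gp is finite. Then for every subset S ⊆ Q whose image generates the group Q^gp/P^gp, the monoid Q equals the saturation in Q^gp of the submonoid generated by P ∪ S. In particular Q admits a finite sat-generating set over P, so the inclusion P ⊆ Q is of finite type up to saturation. -/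
/-!
If `n` is the order of the finite group `Q^gp / P^gp`, then `n • q ∈ P^gp` for every `q ∈ Q`, so
`n • q ∈ Q ∩ P^gp = P` by exactness. Hence every element of `Q` already lies in the saturation of
`P` itself, and a fortiori in that of any submonoid between `P` and `Q`; the reverse inclusion is
saturatedness of `Q`. The empty set therefore serves as a finite sat-generating set.
-/

variable {G : Type*} [AddCommGroup G]

theorem exists_nsmul_mem_of_exact (P Q : AddSubmonoid G)
    (hexact : Q ⊓ (gp P).toAddSubmonoid = P)
    (hfin : Finite (↥(gp Q) ⧸ (gp P).addSubgroupOf (gp Q))) {q : G} (hq : q ∈ Q) :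
    ∃ n : ℕ, 1 ≤ n ∧ n • q ∈ P := by
  have hmem := ((gp P).addSubgroupOf (gp Q)).nsmul_index_mem
    ⟨q, AddSubgroup.subset_closure hq⟩
  refine ⟨((gp P).addSubgroupOf (gp Q)).index,
    Nat.one_le_iff_ne_zero.mpr AddSubgroup.index_ne_zero_of_finite, ?_⟩
  exact hexact.le ⟨Q.nsmul_mem hq _, hmem⟩

theorem eq_satIn_closure_union (P Q : AddSubmonoid G) (hPQ : P ≤ Q)
    (hQ : IsSaturated Q) (hexact : Q ⊓ (gp P).toAddSubmonoid = P)
    (hfin : Finite (↥(gp Q) ⧸ (gp P).addSubgroupOf (gp Q)))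
    (S : Set G) (hS : S ⊆ (Q : Set G)) :
    (Q : Set G) = satIn (AddSubmonoid.closure ((P : Set G) ∪ S)) (gp Q) := by
  apply Set.Subset.antisymm
  · intro q hq
    obtain ⟨n, hn, hnq⟩ := exists_nsmul_mem_of_exact P Q hexact hfin hq
    exact ⟨AddSubgroup.subset_closure hq, n, hn, AddSubmonoid.subset_closure (Or.inl hnq)⟩
  · rintro x ⟨hx, n, hn, hnx⟩
    rw [hQ]
    exact ⟨hx, n, hn, AddSubmonoid.closure_le.mpr (Set.union_subset hPQ hS) hnx⟩

/-- Let `P ⊆ Q` be submonoids of an abelian group `G` with `Q` saturated, `P = Q ∩ P^gp`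
(exactness), and `Q^gp/P^gp` finite.  Then every subset `S ⊆ Q` whose image generates
`Q^gp/P^gp` (i.e. `P^gp ∪ S` generates `Q^gp` as a group) is a sat-generating set: `Q` is
the saturation in `Q^gp` of the submonoid generated by `P ∪ S`.  In particular `Q` admits
a finite sat-generating set over `P`, so `P ⊆ Q` is sft. -/
theorem kummer_etale_sft (P Q : AddSubmonoid G) (hPQ : P ≤ Q)
    (hQ : IsSaturated Q) (hexact : Q ⊓ (gp P).toAddSubmonoid = P)
    (hfin : Finite (↥(gp Q) ⧸ (gp P).addSubgroupOf (gp Q))) :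
    (∀ S : Set G, S ⊆ (Q : Set G) →
        AddSubgroup.closure ((gp P : Set G) ∪ S) = gp Q →
        (Q : Set G) = satIn (AddSubmonoid.closure ((P : Set G) ∪ S)) (gp Q)) ∧
    ∃ S : Set G, S.Finite ∧ S ⊆ (Q : Set G) ∧
      (Q : Set G) = satIn (AddSubmonoid.closure ((P : Set G) ∪ S)) (gp Q) := by
  exact ⟨fun S hS _ => eq_satIn_closure_union P Q hPQ hQ hexact hfin S hS,
    ∅, Set.finite_empty, Set.empty_subset _,
    eq_satIn_closure_union P Q hPQ hQ hexact hfin ∅ (Set.empty_subset _)⟩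
end

section
/- Let G be an abelian group, V ⊆ G a divisible valuative submonoid, P ⊆ G the submonoid generated by V ∪ T for a finite subset T ⊆ G, and Q ⊆ G a saturated submonoid with P ⊆ Q, Q ∩ P^gp = P, and such that the quotient group Q^gp/P^gp is finite. Then Q is finite as a P-set: there exists a finite subset U ⊆ Q such that Q = {p + u : p ∈ P, u ∈ U}. -/
/-!
Let `N` be the order of `Q^gp / P^gp`. For `x ∈ Q` the multiple `N • x` lies in
`Q ∩ P^gp = P`, so `N • x = v + N • m + s` with `v ∈ V`, `m` in the submonoid generated by `T`, and
`s` in a finite set `S` of remainders, obtained by dividing the coefficients of the elements of `T`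
by `N` (`exists_finite_remainders`). Divisibility of `V^gp` gives `v = N • w`, and `w ∈ V` because
`V` is valuative (`IsValuative.mem_of_nsmul_mem`). Hence `x = (w + m) + y` with `w + m ∈ P` and
`N • y = s ∈ S`, and `y ∈ Q` since `Q` is saturated.

Two such elements `y`, `u` with the same multiple `N • y = N • u` and the same class modulo `P^gp`
differ by an `N`-torsion element of `P^gp`, which is in `Q` by saturation, hence in `P`. As there
are finitely many pairs (value in `S`, class in `Q^gp / P^gp`), choosing one `y` for each pair
that occurs gives the finite set `U`.
-/

variable {G : Type*} [AddCommGroup G]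

/-- Division with remainder by `N` in a finitely generated monoid. -/
lemma exists_finite_remainders (N : ℕ) (hN : 1 ≤ N) {T : Set G} (hT : T.Finite) :
    ∃ S : Set G, S.Finite ∧ S ⊆ AddSubmonoid.closure T ∧
      ∀ x ∈ AddSubmonoid.closure T, ∃ m ∈ AddSubmonoid.closure T, ∃ s ∈ S, x = N • m + s := by
  induction T, hT using Set.Finite.induction_on with
  | empty =>
    refine ⟨{0}, Set.finite_singleton 0, by simp, fun x hx => ⟨0, zero_mem _, 0, rfl, ?_⟩⟩
    simpa using hx
  | @insert a T _ _ ih =>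
    obtain ⟨S, hSf, hSsub, hS⟩ := ih
    have ha : a ∈ AddSubmonoid.closure (insert a T) :=
      AddSubmonoid.subset_closure (Set.mem_insert a T)
    have hle : AddSubmonoid.closure T ≤ AddSubmonoid.closure (insert a T) :=
      AddSubmonoid.closure_mono (Set.subset_insert a T)
    refine ⟨Set.image2 (fun r s => r • a + s) (Set.Iio N) S,
      Set.Finite.image2 _ (Set.finite_Iio N) hSf, ?_, ?_⟩
    · rintro _ ⟨r, -, s, hs, rfl⟩
      exact add_mem (nsmul_mem ha r) (hle (hSsub hs))
    · intro x hx
      rw [Set.insert_eq, AddSubmonoid.closure_union, AddSubmonoid.mem_sup] at hx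
      obtain ⟨y, hy, z, hz, rfl⟩ := hx
      obtain ⟨k, rfl⟩ := AddSubmonoid.mem_closure_singleton.mp hy
      obtain ⟨m, hm, s, hs, rfl⟩ := hS z hz
      refine ⟨(k / N) • a + m, add_mem (nsmul_mem ha _) (hle hm), (k % N) • a + s,
        ⟨k % N, Nat.mod_lt _ hN, s, hs, rfl⟩, ?_⟩
      conv_lhs => rw [← Nat.div_add_mod k N]
      rw [add_nsmul, mul_nsmul', nsmul_add]
      abel

/-- A valuative submonoid is saturated. -/
lemma IsValuative.mem_of_nsmul_mem_s15 {V : AddSubmonoid G} (hV : IsValuative V) {N : ℕ} (hN : 1 ≤ N)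
    {w : G} (hw : w ∈ gp V) (h : N • w ∈ V) : w ∈ V := by
  rcases hV w hw with h' | h'
  · exact h'
  · obtain ⟨k, rfl⟩ := Nat.exists_eq_add_of_le' hN
    have : (k + 1) • w + k • (-w) = w := by
      rw [add_nsmul, smul_neg, one_nsmul]
      abel
    exact this ▸ add_mem h (nsmul_mem h' k)

/-- Let `V` be a divisible valuative submonoid of an abelian group `G`, `P` the submonoid
generated by `V ∪ T` for a finite `T`, and `Q ⊇ P` a saturated submonoid with
`Q ∩ P^gp = P` and `Q^gp/P^gp` finite (a Kummer étale extension of monoids of type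
`(V_div)`).  Then `Q` is finite as a `P`-set: `Q = P + U` for some finite `U ⊆ Q`. -/
theorem kummer_finite_over_typeVdiv (V : AddSubmonoid G) (hV : IsValuative V)
    (hVdiv : IsDivisible V) (T : Set G) (hT : T.Finite)
    (P : AddSubmonoid G) (hPdef : P = AddSubmonoid.closure ((V : Set G) ∪ T))
    (Q : AddSubmonoid G) (hQ : IsSaturated Q) (hPQ : P ≤ Q)
    (hexact : Q ⊓ (gp P).toAddSubmonoid = P)
    (hfin : Finite (↥(gp Q) ⧸ (gp P).addSubgroupOf (gp Q))) :
    ∃ U : Set G, U.Finite ∧ U ⊆ (Q : Set G) ∧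
      (Q : Set G) = Set.image2 (· + ·) (P : Set G) U := by
  obtain ⟨N, hNdef⟩ : ∃ N, N = Nat.card (↥(gp Q) ⧸ (gp P).addSubgroupOf (gp Q)) := ⟨_, rfl⟩
  have hN : 1 ≤ N := hNdef ▸ Nat.card_pos
  have hsat : ∀ x ∈ gp Q, N • x ∈ Q → x ∈ Q := fun x hx h => by
    have : x ∈ (Q : Set G) := by
      rw [hQ]
      exact ⟨hx, N, hN, h⟩
    exact this
  have hQgp : ∀ x ∈ Q, x ∈ gp Q := fun x hx => AddSubgroup.subset_closure hx
  have hP : ∀ x ∈ Q, x ∈ gp P → x ∈ P := fun x hx hx' => hexact ▸ ⟨hx, hx'⟩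
  have hgp : gp P ≤ gp Q := AddSubgroup.closure_mono hPQ
  have hNP : ∀ x ∈ Q, N • x ∈ P := fun x hx => by
    refine hP _ (nsmul_mem hx N) ?_
    have h0 : N • ((⟨x, hQgp x hx⟩ : gp Q) : ↥(gp Q) ⧸ (gp P).addSubgroupOf (gp Q)) = 0 :=
      hNdef ▸ card_nsmul_eq_zero'
    rw [← QuotientAddGroup.mk_nsmul, QuotientAddGroup.eq_zero_iff,
      AddSubgroup.mem_addSubgroupOf] at h0
    exact h0
  have hVP : V ≤ P := fun v hv => hPdef ▸ AddSubmonoid.subset_closure (Or.inl hv)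
  have hTP : AddSubmonoid.closure T ≤ P :=
    hPdef ▸ AddSubmonoid.closure_mono Set.subset_union_right
  obtain ⟨S, hSf, hSsub, hS⟩ := exists_finite_remainders N hN hT
  -- Every element of `Q` is, up to translation by `P`, an element whose `N`-th multiple is in `S`.
  have hdecomp : ∀ x ∈ Q, ∃ p ∈ P, ∃ y ∈ Q, N • y ∈ S ∧ x = p + y := by
    intro x hx
    have hx' := hNP x hx
    rw [hPdef, AddSubmonoid.closure_union, AddSubmonoid.closure_eq, AddSubmonoid.mem_sup] at hx'
    obtain ⟨v, hv, t, ht, hvt⟩ := hx'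
    obtain ⟨m, hm, s, hs, rfl⟩ := hS t ht
    obtain ⟨w, hw, rfl⟩ := hVdiv v (AddSubgroup.subset_closure hv) N hN
    have hwm : w + m ∈ P := add_mem (hVP (hV.mem_of_nsmul_mem_s15 hN hw hv)) (hTP hm)
    have hy : N • (x - (w + m)) = s := by
      rw [nsmul_sub, ← hvt, nsmul_add]
      abel
    refine ⟨w + m, hwm, x - (w + m), ?_, hy ▸ hs, by abel⟩
    exact hsat _ (sub_mem (hQgp x hx) (hQgp _ (hPQ hwm))) (hy ▸ hPQ (hTP (hSsub hs)))
  let κ : G → G × (G ⧸ gp P) := fun y => (N • y, (y : G ⧸ gp P))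
  obtain ⟨U, hUsub, hU⟩ := Set.exists_subset_bijOn {y | y ∈ Q ∧ N • y ∈ S} κ
  have hκfin : (κ '' {y | y ∈ Q ∧ N • y ∈ S}).Finite := by
    let φ := QuotientAddGroup.map ((gp P).addSubgroupOf (gp Q)) (gp P) (gp Q).subtype le_rfl
    refine (hSf.prod (Set.finite_range φ)).subset ?_
    rintro _ ⟨y, ⟨hyQ, hyS⟩, rfl⟩
    exact ⟨hyS, ((⟨y, hQgp y hyQ⟩ : gp Q) : ↥(gp Q) ⧸ (gp P).addSubgroupOf (gp Q)), rfl⟩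
  refine ⟨U, hU.finite_iff_finite.mpr hκfin, fun u hu => (hUsub hu).1, Set.Subset.antisymm ?_ ?_⟩
  · intro x hx
    obtain ⟨p, hp, y, hyQ, hyS, rfl⟩ := hdecomp x hx
    obtain ⟨u, hu, huy⟩ := hU.surjOn (Set.mem_image_of_mem κ ⟨hyQ, hyS⟩)
    have h1 : N • u = N • y := congrArg Prod.fst huy
    have h2 : -u + y ∈ gp P := QuotientAddGroup.eq.mp (congrArg Prod.snd huy)
    -- `-u + y` is `N`-torsion, hence in `Q` by saturation.
    have h3 : -u + y ∈ P := by
      refine hP _ (hsat _ (hgp h2) ?_) h2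
      rw [nsmul_add, smul_neg, h1, neg_add_cancel]
      exact zero_mem Q
    exact ⟨p + (-u + y), add_mem hp h3, u, hu, by simp only []; abel⟩
  · rintro _ ⟨p, hp, u, hu, rfl⟩
    exact add_mem (hPQ hp) (hUsub hu).1
end

section
/- Let G be an abelian group, P ⊆ G a submonoid, and P^sat = {x ∈ P^gp : ∃ n ≥ 1, n•x ∈ P} its saturation. Then the ring homomorphism AddMonoidAlgebra ℤ P → AddMonoidAlgebra ℤ P^sat induced by the inclusion P ⊆ P^sat is integral: every element of AddMonoidAlgebra ℤ P^sat is integral over the image of AddMonoidAlgebra ℤ P. -/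
/-!
The elements of `ℤ[P^sat]` integral over `ℤ[P]` form a subring, and `ℤ[P^sat]` is generated
additively by its monomials, so it suffices to treat the monomial at a single `y ∈ P^sat`.
Choosing `n ≥ 1` with `n • y ∈ P`, its `n`-th power is the monomial at `n • y`, which lies in the
image of `ℤ[P]`; an element with an integral positive power is integral.
-/

variable {G : Type*} [AddCommGroup G]

/-- The saturation `P^sat = {x ∈ P^gp : ∃ n ≥ 1, n • x ∈ P}` of a submonoid `P` of an
abelian group. -/
def satSubmonoid (P : AddSubmonoid G) : AddSubmonoid G where
  carrier := {x : G | x ∈ gp P ∧ ∃ n : ℕ, 1 ≤ n ∧ n • x ∈ P}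
  zero_mem' := ⟨(gp P).zero_mem, 1, le_refl 1, by simpa using P.zero_mem⟩
  add_mem' := by
    rintro a b ⟨ha, n, hn1, hna⟩ ⟨hb, m, hm1, hmb⟩
    refine ⟨(gp P).add_mem ha hb, n * m, ?_, ?_⟩
    · exact Nat.one_le_iff_ne_zero.mpr
        (Nat.mul_ne_zero (Nat.one_le_iff_ne_zero.mp hn1) (Nat.one_le_iff_ne_zero.mp hm1))
    · have h1 : (n * m) • a = m • (n • a) := by rw [mul_comm, mul_smul]
      have h2 : (n * m) • b = n • (m • b) := by rw [mul_smul]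
      rw [smul_add, h1, h2]
      exact P.add_mem (AddSubmonoid.nsmul_mem P hna m) (AddSubmonoid.nsmul_mem P hmb n)

theorem le_satSubmonoid (P : AddSubmonoid G) : P ≤ satSubmonoid P := fun x hx =>
  ⟨AddSubgroup.subset_closure hx, 1, le_refl 1, by simpa using hx⟩

/-- The ring homomorphism `ℤ[P] → ℤ[P^sat]` induced by the inclusion of a submonoid `P`
of an abelian group into its saturation is integral: every element of `ℤ[P^sat]` is
integral over the image of `ℤ[P]`. -/
theorem saturation_isIntegral (P : AddSubmonoid G) :
    (AddMonoidAlgebra.mapDomainRingHom ℤ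
      (AddSubmonoid.inclusion (le_satSubmonoid P))).IsIntegral := by
  let := (AddMonoidAlgebra.mapDomainRingHom ℤ
    (AddSubmonoid.inclusion (le_satSubmonoid P))).toAlgebra
  intro x
  change IsIntegral (AddMonoidAlgebra ℤ P) x
  induction x using AddMonoidAlgebra.induction_on with
  | of m =>
    -- The monomial at `y` is integral: its `n`-th power is the monomial at `n • y ∈ P`.
    obtain ⟨y, hy, n, hn, hny⟩ := m
    refine IsIntegral.of_pow (n := n) hn ?_
    convert isIntegral_algebraMap (R := AddMonoidAlgebra ℤ P)
      (x := AddMonoidAlgebra.single ⟨n • y, hny⟩ 1) using 1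
    simp [RingHom.algebraMap_toAlgebra, AddMonoidAlgebra.single_pow]
    rfl
  | add f g hf hg => exact hf.add hg
  | smul r f hf => exact hf.zsmul r
end

section
/- Let G be an abelian group, P ⊆ G a submonoid, P^sat = {x ∈ P^gp : ∃ n ≥ 1, n•x ∈ P} its saturation, and k an algebraically closed field. Then every monoid homomorphism φ from the additive monoid P to the multiplicative monoid of k (i.e., φ(0) = 1 and φ(a + b) = φ(a)·φ(b) for all a, b ∈ P) extends to a monoid homomorphism ψ : P^sat → k with ψ(x) = φ(x) for all x ∈ P. -/
/-!
The elements of `P` on which `φ` does not vanish form a face `F`, and `φ` restricts to a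
homomorphism from `F` to `kˣ`. As `k` is algebraically closed, `kˣ` is divisible, hence injective
as an abelian group, so this restriction extends to a character `χ : G → kˣ`
(`exists_extension_of_divisible`). An element of `P^sat` is called non-vanishing when one of its
positive multiples lies in `F`; the non-vanishing elements form a face of `P^sat`
(`nonvanishing_add_iff`) that meets `P` in `F`. The extension `ψ` is `χ` on that face and `0`
elsewhere.
-/

variable {G : Type*} [AddCommGroup G]

/-- A homomorphism from a submonoid of an abelian group to a divisible group extends to the whole
group: it extends to the Grothendieck group of the submonoid, which embeds in `G` by
cancellativity, and then to `G` by Baer's criterion. -/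
theorem exists_extension_of_divisible {A : Type*} [AddCommGroup A] [DivisibleBy A ℤ]
    (F : AddSubmonoid G) (f : ↥F →+ A) : ∃ g : G →+ A, ∀ x : ↥F, g x = f x := by
  let i : Algebra.GrothendieckAddGroup ↥F →+ G := Algebra.GrothendieckAddGroup.lift F.subtype
  have hi_of : ∀ x : ↥F, i (Algebra.GrothendieckAddGroup.of x) = x := fun x =>
    DFunLike.congr_fun (Algebra.GrothendieckAddGroup.lift.symm_apply_apply F.subtype) x
  have hf_of : ∀ x : ↥F,
      Algebra.GrothendieckAddGroup.lift f (Algebra.GrothendieckAddGroup.of x) = f x := fun x =>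
    DFunLike.congr_fun (Algebra.GrothendieckAddGroup.lift.symm_apply_apply f) x
  have hi : Function.Injective i := by
    rw [injective_iff_map_eq_zero]
    intro z hz
    obtain ⟨⟨a, b⟩, hab⟩ := (AddLocalization.addMonoidOf (⊤ : AddSubmonoid ↥F)).surj z
    have hab' : z + Algebra.GrothendieckAddGroup.of (b : ↥F) =
      Algebra.GrothendieckAddGroup.of a := hab
    have h := congrArg i hab'
    rw [map_add, hz, zero_add, hi_of, hi_of] at h
    rw [Subtype.ext h] at hab'
    exact left_eq_add.mp ((add_comm z _).symm ▸ hab'.symm)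
  obtain ⟨g, hg⟩ := (Module.Baer.of_divisible A).extension_property_addMonoidHom i hi
    (Algebra.GrothendieckAddGroup.lift f)
  refine ⟨g, fun x => ?_⟩
  rw [← hf_of, ← hg, AddMonoidHom.comp_apply, hi_of]

/-- The unit group of an algebraically closed field, written additively, is divisible. -/
@[reducible]
noncomputable def divisibleByAdditiveUnits (k : Type*) [Field k] [IsAlgClosed k] :
    DivisibleBy (Additive kˣ) ℤ :=
  letI : DivisibleBy (Additive kˣ) ℕ := divisibleByOfSMulRightSurj _ _ fun {n} hn u => by
    obtain ⟨z, hz⟩ := IsAlgClosed.exists_pow_nat_eq ((u.toMul : kˣ) : k) (Nat.pos_of_ne_zero hn)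
    have hz0 : z ≠ 0 := by
      rintro rfl
      rw [zero_pow hn] at hz
      exact u.toMul.ne_zero hz.symm
    refine ⟨Additive.ofMul (Units.mk0 z hz0), ?_⟩
    apply Additive.toMul.injective
    ext
    simpa using hz
  AddGroup.divisibleByIntOfDivisibleByNat _

/-- The face of `P` consisting of the elements on which `φ` does not vanish. -/
def nonvanishingFace (P : AddSubmonoid G) {k : Type*} [Field k]
    (φ : ↥P → k) (hφ0 : φ 0 = 1) (hφadd : ∀ a b : ↥P, φ (a + b) = φ a * φ b) :
    AddSubmonoid G where
  carrier := {x | ∃ h : x ∈ P, φ ⟨x, h⟩ ≠ 0}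
  zero_mem' := ⟨P.zero_mem, by
    rw [show (⟨0, P.zero_mem⟩ : ↥P) = 0 from rfl, hφ0]; exact one_ne_zero⟩
  add_mem' := by
    rintro a b ⟨ha, ha0⟩ ⟨hb, hb0⟩
    exact ⟨P.add_mem ha hb, (hφadd ⟨a, ha⟩ ⟨b, hb⟩).symm ▸ mul_ne_zero ha0 hb0⟩

section
variable (P : AddSubmonoid G) {k : Type*} [Field k]
    (φ : ↥P → k) (hφ0 : φ 0 = 1) (hφadd : ∀ a b : ↥P, φ (a + b) = φ a * φ b)

/-- The face property, for elements of `P`. -/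
theorem add_mem_nonvanishingFace_iff {a b : G} (ha : a ∈ P) (hb : b ∈ P) :
    a + b ∈ nonvanishingFace P φ hφ0 hφadd ↔
      a ∈ nonvanishingFace P φ hφ0 hφadd ∧ b ∈ nonvanishingFace P φ hφ0 hφadd := by
  refine ⟨?_, fun h => add_mem h.1 h.2⟩
  rintro ⟨h, h0⟩
  have h1 : φ ⟨a, ha⟩ * φ ⟨b, hb⟩ ≠ 0 := hφadd ⟨a, ha⟩ ⟨b, hb⟩ ▸ h0
  exact ⟨⟨ha, left_ne_zero_of_mul h1⟩, ⟨hb, right_ne_zero_of_mul h1⟩⟩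

theorem nsmul_mem_nonvanishingFace {a : G} (ha : a ∈ P) {n : ℕ} (hn : 1 ≤ n)
    (h : n • a ∈ nonvanishingFace P φ hφ0 hφadd) : a ∈ nonvanishingFace P φ hφ0 hφadd := by
  obtain ⟨m, rfl⟩ := Nat.exists_eq_add_of_le' hn
  rw [succ_nsmul] at h
  exact ((add_mem_nonvanishingFace_iff P φ hφ0 hφadd (P.nsmul_mem ha m) ha).mp h).2

/-- The non-vanishing elements of the saturation form a face. -/
theorem nonvanishing_add_iff {a b : G} (ha : a ∈ satSubmonoid P) (hb : b ∈ satSubmonoid P) :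
    (∃ n : ℕ, 1 ≤ n ∧ n • (a + b) ∈ nonvanishingFace P φ hφ0 hφadd) ↔
      (∃ n : ℕ, 1 ≤ n ∧ n • a ∈ nonvanishingFace P φ hφ0 hφadd) ∧
      (∃ n : ℕ, 1 ≤ n ∧ n • b ∈ nonvanishingFace P φ hφ0 hφadd) := by
  constructor
  · rintro ⟨n, hn, h⟩
    obtain ⟨-, p, hp, hpa⟩ := ha
    obtain ⟨-, q, hq, hqb⟩ := hb
    -- a common multiple that sends both `a` and `b` into `P`
    have ha' : (p * q * n) • a ∈ P := by
      rw [show p * q * n = q * n * p by ring, mul_nsmul']; exact P.nsmul_mem hpa _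
    have hb' : (p * q * n) • b ∈ P := by
      rw [show p * q * n = p * n * q by ring, mul_nsmul']; exact P.nsmul_mem hqb _
    have h' : (p * q * n) • (a + b) ∈ nonvanishingFace P φ hφ0 hφadd := by
      rw [mul_nsmul']; exact nsmul_mem h _
    rw [nsmul_add, add_mem_nonvanishingFace_iff P φ hφ0 hφadd ha' hb'] at h'
    have hN : 1 ≤ p * q * n := Nat.mul_pos (Nat.mul_pos hp hq) hn
    exact ⟨⟨_, hN, h'.1⟩, ⟨_, hN, h'.2⟩⟩
  · rintro ⟨⟨p, hp, hpa⟩, ⟨q, hq, hqb⟩⟩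
    refine ⟨p * q, Nat.mul_pos hp hq, ?_⟩
    rw [nsmul_add]
    refine add_mem ?_ ?_
    · rw [mul_comm, mul_nsmul']; exact nsmul_mem hpa _
    · rw [mul_nsmul']; exact nsmul_mem hqb _

/-- The restriction of `φ` to its non-vanishing face, as a homomorphism to the unit group. -/
def nonvanishingFaceHom : ↥(nonvanishingFace P φ hφ0 hφadd) →+ Additive kˣ where
  toFun x := Additive.ofMul (Units.mk0 (φ ⟨x, x.2.1⟩) x.2.2)
  map_zero' := by
    apply Additive.toMul.injective
    ext
    exact hφ0
  map_add' a b := by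
    apply Additive.toMul.injective
    ext
    exact hφadd ⟨a, a.2.1⟩ ⟨b, b.2.1⟩

end

/-- Every monoid homomorphism from (the additive monoid underlying) a submonoid `P` of an
abelian group to the multiplicative monoid of an algebraically closed field `k` extends
to the saturation `P^sat`. -/
theorem extend_to_saturation (P : AddSubmonoid G)
    (k : Type*) [Field k] [IsAlgClosed k]
    (φ : ↥P → k) (hφ0 : φ 0 = 1) (hφadd : ∀ a b : ↥P, φ (a + b) = φ a * φ b) :
    ∃ ψ : ↥(satSubmonoid P) → k, ψ 0 = 1 ∧ (∀ a b, ψ (a + b) = ψ a * ψ b) ∧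
      ∀ x : ↥P, ψ ⟨(x : G), le_satSubmonoid P x.2⟩ = φ x := by
  classical
  let := divisibleByAdditiveUnits k
  obtain ⟨χ, hχ⟩ := exists_extension_of_divisible _ (nonvanishingFaceHom P φ hφ0 hφadd)
  let N : G → Prop := fun x => ∃ n : ℕ, 1 ≤ n ∧ n • x ∈ nonvanishingFace P φ hφ0 hφadd
  refine ⟨fun x => if N x then (((χ x).toMul : kˣ) : k) else 0, ?_, ?_, ?_⟩
  · have h0 : N 0 := ⟨1, le_rfl, by rw [nsmul_zero]; exact zero_mem _⟩
    simp [h0]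
  · intro a b
    have h : N ((a : G) + b) ↔ N a ∧ N b := nonvanishing_add_iff P φ hφ0 hφadd a.2 b.2
    by_cases ha : N a <;> by_cases hb : N b <;> simp [h, ha, hb]
  · intro x
    by_cases hx : φ x = 0
    · have h : ¬ N x := by
        rintro ⟨n, hn, hmem⟩
        exact (nsmul_mem_nonvanishingFace P φ hφ0 hφadd x.2 hn hmem).2 hx
      simp [h, hx]
    · have hmem : (x : G) ∈ nonvanishingFace P φ hφ0 hφadd := ⟨x.2, hx⟩
      have h : N x := ⟨1, le_rfl, by rwa [one_nsmul]⟩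
      have hχx := hχ ⟨x, hmem⟩
      simp only [h, if_true]
      rw [hχx]
      rfl
end

section
/- Let G be an abelian group and P ⊆ Q ⊆ G submonoids such that Q is saturated, P = Q ∩ P^gp, the quotient group Q^gp/P^gp is finite, and the group P^gp is divisible. Then the inclusion P ⊆ Q splits: there exists a finite subgroup M ⊆ Q^gp with Q^gp = P^gp ⊕ M (internally: P^gp + M = Q^gp and P^gp ∩ M = 0) and Q = P + M; in particular there is a monoid homomorphism r : Q → P with r(x) = x for all x ∈ P. -/
/-!
A divisible abelian group is an injective `ℤ`-module, so the identity of `gp P` extends to a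
retraction `ρ : G →+ gp P` (`exists_retraction_of_divisible`). Take `M = gp Q ⊓ ker ρ`: it is a
complement of `gp P` in `gp Q`, hence embeds in the finite group `gp Q / gp P`
(`finite_of_disjoint_of_finite_quotient`). So every `m ∈ M` is torsion, and saturation gives
`M ⊆ Q` since some positive multiple of `m` is `0 ∈ Q`. For `q ∈ Q` the element `q - ρ q` lies in
`M`; subtracting it from `q` stays in `Q`, so `ρ q ∈ Q ∩ gp P = P` by exactness. Thus `Q = P + M`,
and `ρ` restricts to the retraction `Q → P`.
-/

variable {G : Type*} [AddCommGroup G]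

/-- A divisible subgroup of an abelian group is a retract, by injectivity of divisible groups. -/
lemma exists_retraction_of_divisible (H : AddSubgroup G)
    (hdiv : ∀ x ∈ H, ∀ n : ℕ, 1 ≤ n → ∃ y ∈ H, n • y = x) :
    ∃ ρ : G →+ H, ∀ x : H, ρ x = x := by
  have hsurj : ∀ {n : ℕ}, n ≠ 0 → Function.Surjective (fun a : H => n • a) := by
    intro n hn x
    obtain ⟨y, hy, hxy⟩ := hdiv x x.2 n (Nat.one_le_iff_ne_zero.mpr hn)
    exact ⟨⟨y, hy⟩, Subtype.ext hxy⟩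
  let _ : DivisibleBy H ℕ := divisibleByOfSMulRightSurj H ℕ hsurj
  let _ : DivisibleBy H ℤ := AddGroup.divisibleByIntOfDivisibleByNat H
  obtain ⟨ρ, hρ⟩ := (Module.Baer.of_divisible H).extension_property_addMonoidHom
    H.subtype H.subtype_injective (AddMonoidHom.id H)
  exact ⟨ρ, fun x => DFunLike.congr_fun hρ x⟩

/-- A subgroup of `K` meeting `H` trivially embeds in `K / H`, so it is finite when `K / H` is. -/
lemma finite_of_disjoint_of_finite_quotient {H K M : AddSubgroup G} (hMK : M ≤ K)
    (hHM : H ⊓ M = ⊥) (hfin : Finite (K ⧸ H.addSubgroupOf K)) : Finite M := by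
  refine Finite.of_injective
    ((QuotientAddGroup.mk' (H.addSubgroupOf K)).comp (AddSubgroup.inclusion hMK)) ?_
  rw [injective_iff_map_eq_zero]
  intro m hm
  have hmH : (m : G) ∈ H := by
    simpa [AddSubgroup.mem_addSubgroupOf] using (QuotientAddGroup.eq_zero_iff _).mp hm
  have h : (m : G) ∈ H ⊓ M := ⟨hmH, m.2⟩
  rw [hHM, AddSubgroup.mem_bot] at h
  exact Subtype.ext h

/-- Splitting of a Kummer étale extension over a divisible base: let `P ⊆ Q` be
submonoids of an abelian group `G` with `Q` saturated, `P = Q ∩ P^gp`, `Q^gp/P^gp`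
finite, and `P^gp` divisible.  Then there is a finite subgroup `M ⊆ Q^gp` with
`Q^gp = P^gp ⊕ M` and `Q = P + M`; in particular there is a retraction `r : Q → P`
restricting to the identity on `P`. -/
theorem kummer_splits_of_divisible (P Q : AddSubmonoid G) (hPQ : P ≤ Q)
    (hQ : IsSaturated Q) (hexact : Q ⊓ (gp P).toAddSubmonoid = P)
    (hfin : Finite (↥(gp Q) ⧸ (gp P).addSubgroupOf (gp Q)))
    (hdiv : ∀ x ∈ gp P, ∀ n : ℕ, 1 ≤ n → ∃ y ∈ gp P, n • y = x) :
    ∃ M : AddSubgroup G, M ≤ gp Q ∧ (M : Set G).Finite ∧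
      gp P ⊔ M = gp Q ∧ gp P ⊓ M = ⊥ ∧
      (Q : Set G) = Set.image2 (· + ·) (P : Set G) (M : Set G) ∧
      ∃ r : ↥Q →+ ↥P, ∀ (x : G) (hx : x ∈ P), r ⟨x, hPQ hx⟩ = ⟨x, hx⟩ := by
  obtain ⟨ρ, hρ⟩ := exists_retraction_of_divisible (gp P) hdiv
  have hgp : gp P ≤ gp Q := AddSubgroup.closure_mono hPQ
  have hle : gp Q ⊓ ρ.ker ≤ gp Q := inf_le_left
  have hbot : gp P ⊓ (gp Q ⊓ ρ.ker) = ⊥ := by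
    rw [eq_bot_iff]
    rintro x ⟨hxP, -, hx⟩
    have h : (⟨x, hxP⟩ : gp P) = 0 := (hρ ⟨x, hxP⟩).symm.trans hx
    exact congrArg Subtype.val h
  have hfinM : Finite ↥(gp Q ⊓ ρ.ker) := finite_of_disjoint_of_finite_quotient hle hbot hfin
  have hsub : ∀ x ∈ gp Q, x - ρ x ∈ gp Q ⊓ ρ.ker := fun x hx =>
    AddSubgroup.mem_inf.mpr ⟨(gp Q).sub_mem hx (hgp (ρ x).2),
      by rw [AddMonoidHom.mem_ker, map_sub, hρ, sub_self]⟩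
  -- Elements of the complement are torsion, so saturation puts them in `Q`.
  have hMQ : ∀ m ∈ gp Q ⊓ ρ.ker, m ∈ Q := by
    intro m hm
    rw [← SetLike.mem_coe, hQ]
    refine ⟨hm.1, Nat.card ↥(gp Q ⊓ ρ.ker), Nat.card_pos, ?_⟩
    have h : Nat.card ↥(gp Q ⊓ ρ.ker) • (⟨m, hm⟩ : ↥(gp Q ⊓ ρ.ker)) = 0 := card_nsmul_eq_zero'
    have h' : Nat.card ↥(gp Q ⊓ ρ.ker) • m = 0 := congrArg Subtype.val h
    rw [h']
    exact Q.zero_mem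
  have hρP : ∀ q ∈ Q, (ρ q : G) ∈ P := by
    intro q hq
    have h := Q.add_mem hq (hMQ _ (neg_mem (hsub q (AddSubgroup.subset_closure hq))))
    rw [neg_sub, add_sub_cancel] at h
    exact hexact.le ⟨h, (ρ q).2⟩
  refine ⟨gp Q ⊓ ρ.ker, hle, Set.toFinite _, ?_, hbot, ?_, ?_⟩
  · refine le_antisymm (sup_le hgp hle) fun x hx => ?_
    exact AddSubgroup.mem_sup.mpr ⟨ρ x, (ρ x).2, x - ρ x, hsub x hx, add_sub_cancel _ _⟩
  · ext q
    constructor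
    · intro hq
      exact ⟨ρ q, hρP q hq, q - ρ q, hsub q (AddSubgroup.subset_closure hq), add_sub_cancel _ _⟩
    · rintro ⟨p, hp, m, hm, rfl⟩
      exact Q.add_mem (hPQ hp) (hMQ m hm)
  · refine ⟨(((gp P).subtype.comp ρ).comp Q.subtype).codRestrict P fun q => hρP q q.2, ?_⟩
    intro x hx
    have h : ρ x = ⟨x, AddSubgroup.subset_closure hx⟩ := hρ ⟨x, _⟩
    have h' : (ρ x : G) = x := congrArg Subtype.val h
    exact Subtype.ext h'
end

section
/- Let G be an abelian group, V ⊆ G a divisible valuative submonoid, and P ⊆ G the submonoid generated by V ∪ T for a finite subset T ⊆ G. Then for every integer n ≥ 1 the quotient group P^gp/n•P^gp is finite. -/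
/-!
A divisible group dies modulo `n`: every element of `V^gp` is `n` times an element of `V^gp ⊆ P^gp`.
Since `P^gp` is generated as a group by `V ∪ T`, the quotient `P^gp / n • P^gp` is therefore
generated by the image of the finite set `T`. It is also killed by `n ≥ 1`, and a finitely generated
torsion abelian group is finite.
-/

variable {G : Type*} [AddCommGroup G]

theorem gp_closure (s : Set G) : gp (AddSubmonoid.closure s) = AddSubgroup.closure s := by
  apply le_antisymm
  · refine (AddSubgroup.closure_le _).2 fun x hx => ?_
    have h : AddSubmonoid.closure s ≤ (AddSubgroup.closure s).toAddSubmonoid :=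
      AddSubmonoid.closure_le.2 AddSubgroup.subset_closure
    exact h hx
  · exact AddSubgroup.closure_mono AddSubmonoid.subset_closure

/-- Let `V` be a divisible valuative submonoid of an abelian group `G` and `P` the
submonoid generated by `V ∪ T` for a finite subset `T` (so `P` is of type `(V_div)`).
Then for every integer `n ≥ 1` the quotient group `P^gp / n • P^gp` is finite. -/
theorem typeVdiv_gp_mod_n_finite (V : AddSubmonoid G) (hV : IsValuative V)
    (hVdiv : IsDivisible V) (T : Set G) (hT : T.Finite)
    (P : AddSubmonoid G) (hPdef : P = AddSubmonoid.closure ((V : Set G) ∪ T))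
    (n : ℕ) (hn : 1 ≤ n) :
    Finite (↥(gp P) ⧸ (n • AddMonoidHom.id ↥(gp P)).range) := by
  have hgp : gp P = AddSubgroup.closure ((V : Set G) ∪ T) := by rw [hPdef, gp_closure]
  have hVP : gp V ≤ gp P := by
    rw [hgp]
    exact AddSubgroup.closure_mono Set.subset_union_left
  set N := (n • AddMonoidHom.id ↥(gp P)).range with hN
  have mk_smul (y : gp P) : (QuotientAddGroup.mk (n • y) : gp P ⧸ N) = 0 :=
    (QuotientAddGroup.eq_zero_iff _).2 ⟨y, rfl⟩
  let S : Set (gp P ⧸ N) := QuotientAddGroup.mk '' ((↑) ⁻¹' T : Set (gp P))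
  have hS : S.Finite := (hT.preimage Subtype.val_injective.injOn).image _
  have key : ∀ x (hx : x ∈ gp P),
      (QuotientAddGroup.mk ⟨x, hx⟩ : gp P ⧸ N) ∈ AddSubgroup.closure S := by
    intro x hx
    have hx' := hx
    rw [hgp] at hx'
    induction hx' using AddSubgroup.closure_induction with
    | mem x h =>
      rcases h with h | h
      · obtain ⟨y, hy, rfl⟩ := hVdiv x (AddSubgroup.subset_closure h) n hn
        have h0 : (QuotientAddGroup.mk ⟨n • y, hx⟩ : gp P ⧸ N) = 0 := mk_smul ⟨y, hVP hy⟩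
        rw [h0]
        exact zero_mem _
      · exact AddSubgroup.subset_closure ⟨⟨x, hx⟩, h, rfl⟩
    | zero => exact zero_mem _
    | add a b ha hb iha ihb =>
      rw [← hgp] at ha hb
      exact add_mem (iha ha) (ihb hb)
    | neg a ha iha =>
      rw [← hgp] at ha
      exact neg_mem (iha ha)
  have htop : AddSubgroup.closure S = ⊤ := by
    refine (AddSubgroup.eq_top_iff' _).2 fun q => ?_
    induction q using QuotientAddGroup.induction_on with
    | H z => exact key z.1 z.2
  have hfg : AddGroup.FG (gp P ⧸ N) := AddGroup.fg_iff.2 ⟨S, htop, hS⟩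
  refine AddCommGroup.finite_of_fg_isAddTorsion _ fun q => ?_
  induction q using QuotientAddGroup.induction_on with
  | H z => exact isOfFinAddOrder_iff_nsmul_eq_zero.2 ⟨n, hn, mk_smul z⟩
end
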